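/- arXiv:1512.09174 — 4 statements merged into one kernel-verified Lean document; each statement's English description precedes it below -/
import Mathlib

section
/- Given reals a, c, δ, γ > 0 satisfying (i) c < min(a, δ), (ii) γ ≥ 4a and γ > δ, (iii) δ + (c/δ)·γ ≤ a, suppose f satisfies (H) and (H''). Let x be a solution on [-1,∞) of x'(t) = f(x(t-1)) whose initial segment φ satisfies φ(0) = -2a and -γ ≤ φ(s) ≤ -2a for all s ∈ [-1,0]. Then there exists τ₃ > 2 such that x(t + τ₃) = -x(t) for all t ≥ 0; in particular x(t + 2τ₃) = x(t) for all t ≥ 0. -/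
/-!
Since `f` is odd, `-x` is again a solution, so both halves of the cycle are instances of one fact:
a solution that has spent a unit of time in a band `[l, m]` on which `f = -k < 0` descends with
slope `-k` until it hits `l`. On `[0, 1]` the solution `-x` falls from `2a` with slope `-δ`, and by
`δ + (c / δ) γ ≤ a` it spends the unit of time up to `1 + c / δ` in `[a, 2a - c]`, where `f = -γ`.
It therefore hits `a` at some time and then runs affinely from `a` to `a - γ`. So `x` crosses zero
affinely, at `σ` say; one time unit later its derivative is odd about `σ + 1`, hence `x` is
symmetric about `σ + 1`. It follows that `x` spends a unit of time in `[2a, γ]`, where `f = -δ`,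
and hits `2a` at a time `τ₃`. Now `x (· + τ₃)` and `-x` have initial segments in `[2a, γ]` with the
same value at `0`. As `f` is constant on that band, the two solutions coincide.
-/

open Set Filter

/-- Hypotheses (H): `f` is continuous, satisfies the negative feedback condition,
and is differentiable on a neighborhood of `0` with `f'(0) < 0`. -/
def HypH (f : ℝ → ℝ) : Prop :=
  Continuous f ∧ (∀ x : ℝ, x ≠ 0 → x * f x < 0) ∧
    (∀ᶠ y in nhds (0 : ℝ), DifferentiableAt ℝ f y) ∧ deriv f 0 < 0

/-- A solution on `[-1,∞)` of the delay equation `x'(t) = f (x (t-1))`. -/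
def IsSolOn (f x : ℝ → ℝ) : Prop :=
  ContinuousOn x (Ici (-1)) ∧ ∀ t : ℝ, 0 < t → HasDerivAt x (f (x (t - 1))) t

/-- Membership in the set `K`: `φ(-1) = 0`, `φ` nondecreasing on `[-1,0]`,
continuous there, and `|φ| ≤ M`. -/
def MemK (M : ℝ) (φ : ℝ → ℝ) : Prop :=
  ContinuousOn φ (Icc (-1) 0) ∧ φ (-1) = 0 ∧ MonotoneOn φ (Icc (-1) 0) ∧
    ∀ s ∈ Icc (-1 : ℝ) 0, |φ s| ≤ M

/-- `T` is the minimal (positive) period of `p`. -/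
def MinPeriod {α : Type*} (p : ℝ → α) (T : ℝ) : Prop :=
  0 < T ∧ (∀ t, p (t + T) = p t) ∧
    ∀ T' : ℝ, 0 < T' → (∀ t, p (t + T') = p t) → T ≤ T'

/-- A slowly oscillating periodic (SOP) solution of `x'(t) = f (x (t-1))`:
a nonconstant periodic differentiable solution any two of whose distinct
zeros are separated by more than `1`. -/
def IsSOP (f p : ℝ → ℝ) : Prop :=
  (∀ t : ℝ, HasDerivAt p (f (p (t - 1))) t) ∧
    (∃ T : ℝ, 0 < T ∧ ∀ t, p (t + T) = p t) ∧
    (∃ t s : ℝ, p t ≠ p s) ∧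
    ∀ z z' : ℝ, p z = 0 → p z' = 0 → z ≠ z' → 1 < |z - z'|

/-- A Kaplan–Yorke solution: an SOP solution of minimal period `4`
satisfying `x(t) = -x(t-2)`. -/
def IsKY (f x : ℝ → ℝ) : Prop :=
  IsSOP f x ∧ MinPeriod x 4 ∧ ∀ t : ℝ, x t = -x (t - 2)

/-- Hypotheses (H') with constants `μ, β, σ`. -/
def HypH' (f : ℝ → ℝ) (μ β σ : ℝ) : Prop :=
  (∀ x : ℝ, |f x| ≤ μ) ∧ ∀ x : ℝ, β ≤ |x| → σ ≤ |f x|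

/-- Hypotheses (H'') with constants `a, c, δ, γ`. -/
def HypH'' (f : ℝ → ℝ) (a c δ γ : ℝ) : Prop :=
  (∀ x : ℝ, f (-x) = -f x) ∧ (∀ x ∈ Icc (0 : ℝ) (2 * a), |f x| ≤ γ) ∧
    (∀ x ∈ Icc a (2 * a - c), f x = -γ) ∧ ∀ x ∈ Icc (2 * a) γ, f x = -δ

/-- The minimal period of `p` equals `z'' - z` for three consecutive zeros
`z < z' < z''` of `p`. -/
def PeriodThreeZeros (p : ℝ → ℝ) : Prop :=
  ∃ z z' z'' : ℝ, z < z' ∧ z' < z'' ∧ p z = 0 ∧ p z' = 0 ∧ p z'' = 0 ∧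
    (∀ t, t ∈ Ioo z z' ∪ Ioo z' z'' → p t ≠ 0) ∧ MinPeriod p (z'' - z)

theorem image_sub_mem_Icc_of_hasDerivAt {g g' : ℝ → ℝ} {s t m M : ℝ} (hst : s ≤ t)
    (hg : ContinuousOn g (Icc s t)) (hg' : ∀ u ∈ Ioo s t, HasDerivAt g (g' u) u)
    (hb : ∀ u ∈ Ioo s t, g' u ∈ Icc m M) :
    g t - g s ∈ Icc (m * (t - s)) (M * (t - s)) := by
  rcases hst.eq_or_lt with rfl | hst
  · simp
  obtain ⟨u, hu, hslope⟩ := exists_hasDerivAt_eq_slope g g' hst hg hg'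
  have hpos : 0 < t - s := sub_pos.2 hst
  rw [← (eq_div_iff hpos.ne').1 hslope]
  exact ⟨mul_le_mul_of_nonneg_right (hb u hu).1 hpos.le,
    mul_le_mul_of_nonneg_right (hb u hu).2 hpos.le⟩

theorem eq_of_hasDerivAt_eq {g h g' : ℝ → ℝ} {s t : ℝ} (hst : s ≤ t)
    (hg : ContinuousOn g (Icc s t)) (hh : ContinuousOn h (Icc s t))
    (hg' : ∀ u ∈ Ioo s t, HasDerivAt g (g' u) u) (hh' : ∀ u ∈ Ioo s t, HasDerivAt h (g' u) u)
    (hs : g s = h s) : g t = h t := by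
  have hdiff : (g - h) t - (g - h) s ∈ Icc (0 * (t - s)) (0 * (t - s)) :=
    image_sub_mem_Icc_of_hasDerivAt (g' := 0) hst (hg.sub hh)
      (fun u hu => ((hg' u hu).sub (hh' u hu)).congr_deriv (sub_self _)) (by simp)
  simpa [hs, sub_eq_zero] using hdiff

theorem unit_step_induction {P : ℝ → Prop} {σ : ℝ}
    (step : ∀ t, σ ≤ t → (∀ u ∈ Icc σ (t - 1), P u) → P t) {t : ℝ} (ht : σ ≤ t) : P t := by
  have upto : ∀ n : ℕ, ∀ t, σ ≤ t → t < σ + n → P t := by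
    intro n
    induction n with
    | zero => intro t h₁ h₂; simp only [Nat.cast_zero, add_zero] at h₂; linarith
    | succ n ih =>
      intro t h₁ h₂
      push_cast at h₂
      exact step t h₁ fun u hu => ih u hu.1 (by linarith [hu.2])
  obtain ⟨n, hn⟩ := exists_nat_gt (t - σ)
  exact upto n t ht (by linarith)

theorem nonpos_of_odd_of_mul_neg {f : ℝ → ℝ} (hodd : f.Odd)
    (hneg : ∀ y, y ≠ 0 → y * f y < 0) {y : ℝ} (hy : 0 ≤ y) : f y ≤ 0 := by
  rcases hy.eq_or_lt with rfl | hy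
  · exact hodd.map_zero.le
  · exact (neg_of_mul_neg_right (hneg y hy.ne') hy.le).le

namespace IsSolOn

variable {f x y : ℝ → ℝ}

theorem continuousOn_Icc (hx : IsSolOn f x) {s t : ℝ} (hs : -1 ≤ s) : ContinuousOn x (Icc s t) :=
  hx.1.mono (Icc_subset_Ici_self.trans (Ici_subset_Ici.2 hs))

theorem neg (hx : IsSolOn f x) (hodd : f.Odd) : IsSolOn f (-x) :=
  ⟨hx.1.neg, fun t ht => (hx.2 t ht).neg.congr_deriv (hodd _).symm⟩

theorem comp_add_const (hx : IsSolOn f x) {τ : ℝ} (hτ : 0 ≤ τ) :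
    IsSolOn f fun t => x (t + τ) := by
  refine ⟨hx.1.comp (by fun_prop) fun t ht => ?_, fun t ht => ?_⟩
  · rw [mem_Ici] at ht ⊢
    linarith
  · have h := (hx.2 (t + τ) (by linarith)).comp_add_const t τ
    rwa [add_sub_right_comm] at h

theorem eqOn_Ici (hx : IsSolOn f x) (hy : IsSolOn f y) (h0 : x 0 = y 0)
    (hseg : ∀ s ∈ Ioo (-1) 0, f (x s) = f (y s)) : EqOn x y (Ici 0) := by
  refine fun t ht => unit_step_induction (P := fun t => x t = y t) (fun t ht ih => ?_) ht
  refine eq_of_hasDerivAt_eq ht (hx.continuousOn_Icc (by norm_num))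
    (hy.continuousOn_Icc (by norm_num)) (fun u hu => hx.2 u hu.1) (fun u hu => ?_) h0
  have hdelay : f (x (u - 1)) = f (y (u - 1)) := by
    rcases lt_or_ge (u - 1) 0 with h | h
    · exact hseg _ ⟨by linarith [hu.1], h⟩
    · exact congrArg f (ih _ ⟨h, by linarith [hu.2]⟩)
  exact hdelay ▸ hy.2 u hu.1

theorem sub_mem_Icc (hx : IsSolOn f x) {s t m M : ℝ} (hs : 0 ≤ s) (hst : s ≤ t)
    (hb : ∀ u ∈ Ioo (s - 1) (t - 1), f (x u) ∈ Icc m M) :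
    x t - x s ∈ Icc (m * (t - s)) (M * (t - s)) :=
  image_sub_mem_Icc_of_hasDerivAt hst (hx.continuousOn_Icc (by linarith))
    (fun u hu => hx.2 u (hs.trans_lt hu.1))
    fun _ hu => hb _ ⟨sub_lt_sub_right hu.1 1, sub_lt_sub_right hu.2 1⟩

theorem eq_add_mul (hx : IsSolOn f x) {s t k : ℝ} (hs : 0 ≤ s) (hst : s ≤ t)
    (hk : ∀ u ∈ Ioo (s - 1) (t - 1), f (x u) = k) : x t = x s + k * (t - s) := by
  have h := hx.sub_mem_Icc (m := k) (M := k) hs hst fun u hu => by simp [hk u hu]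
  rw [Icc_self, mem_singleton_iff] at h
  linarith

theorem eq_add_mul_of_mapsTo (hx : IsSolOn f x) {S : Set ℝ} {k σ t : ℝ} (hσ : 0 ≤ σ)
    (hf : ∀ y ∈ S, f y = k) (hseg : MapsTo x (Icc (σ - 1) σ) S) (ht : t ∈ Icc σ (σ + 1)) :
    x t = x σ + k * (t - σ) :=
  hx.eq_add_mul hσ ht.1 fun _ hu => hf _ (hseg ⟨hu.1.le, by linarith [hu.2, ht.2]⟩)

theorem eq_add_mul_of_line_mem (hx : IsSolOn f x) {S : Set ℝ} {k σ w t : ℝ} (hσ : 0 ≤ σ)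
    (hf : ∀ y ∈ S, f y = k) (hseg : MapsTo x (Icc (σ - 1) σ) S)
    (hline : ∀ t ∈ Icc σ (σ + w), x σ + k * (t - σ) ∈ S) (ht : t ∈ Icc σ (σ + w)) :
    x t = x σ + k * (t - σ) := by
  refine unit_step_induction (P := fun t => t ≤ σ + w → x t = x σ + k * (t - σ))
    (fun t ht ih htw => hx.eq_add_mul hσ ht fun u hu => hf _ ?_) ht.1 ht.2
  rcases le_total u σ with h | h
  · exact hseg ⟨hu.1.le, h⟩
  · have huw : u ≤ σ + w := by linarith [hu.2]
    exact ih u ⟨h, hu.2.le⟩ huw ▸ hline u ⟨h, huw⟩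

theorem exists_eq_of_mapsTo_Icc (hx : IsSolOn f x) {k l m σ : ℝ} (hk : 0 < k) (hσ : 0 ≤ σ)
    (hf : ∀ y ∈ Icc l m, f y = -k) (hseg : MapsTo x (Icc (σ - 1) σ) (Icc l m)) :
    ∃ τ, σ ≤ τ ∧ x τ = l ∧ MapsTo x (Icc (τ - 1) τ) (Icc l m) := by
  obtain ⟨hl, hm⟩ := hseg (right_mem_Icc.2 (sub_le_self σ zero_le_one))
  set w := (x σ - l) / k
  have hwk : k * w = x σ - l := mul_div_cancel₀ _ hk.ne'
  have hw0 : 0 ≤ w := div_nonneg (sub_nonneg.2 hl) hk.le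
  have hline : ∀ t ∈ Icc σ (σ + w), x σ + -k * (t - σ) ∈ Icc l m := by
    rintro t ⟨h₁, h₂⟩
    constructor <;> nlinarith
  have hdescent : ∀ t ∈ Icc σ (σ + w), x t = x σ + -k * (t - σ) :=
    fun t ht => hx.eq_add_mul_of_line_mem hσ hf hseg hline ht
  refine ⟨σ + w, by linarith, ?_, fun t ht => ?_⟩
  · rw [hdescent _ ⟨by linarith, le_rfl⟩]
    linarith
  · rcases le_total t σ with h | h
    · exact hseg ⟨by linarith [ht.1], h⟩
    · exact hdescent t ⟨h, ht.2⟩ ▸ hline t ⟨h, ht.2⟩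

theorem symm_of_antisymm (hx : IsSolOn f x) (hodd : f.Odd) {σ r v : ℝ} (hr : r ≤ σ + 1)
    (hanti : ∀ u ∈ Ioo 0 r, x (σ + u) = -x (σ - u)) (hv : v ∈ Icc 0 r) :
    x (σ + 1 + v) = x (σ + 1 - v) := by
  obtain ⟨hv0, hvr⟩ := hv
  refine eq_of_hasDerivAt_eq (g := fun u => x (σ + 1 + u)) (h := fun u => x (σ + 1 - u))
    (g' := fun u => f (x (σ + u))) hv0 (hx.1.comp (by fun_prop) ?_)
    (hx.1.comp (by fun_prop) ?_) ?_ ?_ (by simp)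
  · intro u hu
    rw [mem_Ici]
    linarith [hu.1]
  · intro u hu
    rw [mem_Ici]
    linarith [hu.2]
  · intro u hu
    have h := (hx.2 (σ + 1 + u) (by linarith [hu.1])).comp_const_add (σ + 1) u
    rwa [add_right_comm, add_sub_cancel_right] at h
  · intro u hu
    have h := (hx.2 (σ + 1 - u) (by linarith [hu.2])).comp_const_sub (σ + 1) u
    rwa [sub_right_comm, add_sub_cancel_right, ← hodd,
      ← hanti u ⟨hu.1, hu.2.trans_le hvr⟩] at h

theorem mapsTo_Icc_of_descent (hx : IsSolOn f x) {m γ δ e : ℝ} (hγ : 0 ≤ γ) (hδ : 0 ≤ δ)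
    (he0 : 0 ≤ e) (he1 : e ≤ 1) (hf : MapsTo f (Icc (m - δ * e) m) (Icc (-γ) 0))
    (hdescent : ∀ t ∈ Icc 0 1, x t = m - δ * t) :
    MapsTo x (Icc e (1 + e)) (Icc (m - δ - γ * e) (m - δ * e)) := by
  rintro t ⟨het, hte⟩
  rcases le_total t 1 with ht | ht
  · rw [hdescent t ⟨he0.trans het, ht⟩]
    constructor <;> nlinarith
  · have hslope : ∀ u ∈ Ioo (1 - 1) (t - 1), f (x u) ∈ Icc (-γ) 0 := by
      rintro u ⟨hu₁, hu₂⟩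
      rw [hdescent u ⟨by linarith, by linarith⟩]
      exact hf ⟨by nlinarith, by nlinarith⟩
    have hchange := hx.sub_mem_Icc zero_le_one ht hslope
    rw [hdescent 1 (right_mem_Icc.2 zero_le_one)] at hchange
    constructor <;> nlinarith [hchange.1, hchange.2]

theorem exists_affine_descent (hx : IsSolOn f x) {a c δ γ : ℝ} (ha : 0 < a) (hc : 0 < c)
    (hδ : 0 < δ) (haγ : 4 * a ≤ γ) (hcδ : δ + c / δ * γ ≤ a)
    (hf : MapsTo f (Icc 0 (2 * a)) (Icc (-γ) 0)) (hfγ : ∀ y ∈ Icc a (2 * a - c), f y = -γ)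
    (hfδ : ∀ y ∈ Icc (2 * a) γ, f y = -δ) (hx0 : x 0 = 2 * a)
    (hseg : MapsTo x (Icc (-1) 0) (Icc (2 * a) γ)) :
    ∃ τ, 1 ≤ τ ∧ ∀ t ∈ Icc τ (τ + 1), x t = a - γ * (t - τ) := by
  have hγ : 0 < γ := by linarith
  have he0 : 0 ≤ c / δ := by positivity
  have he1 : c / δ ≤ 1 := by nlinarith
  have hδe : δ * (c / δ) = c := mul_div_cancel₀ c hδ.ne'
  have hca : c ≤ a := by nlinarith
  have hdescent : ∀ t ∈ Icc 0 1, x t = 2 * a - δ * t := fun t ht => by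
    rw [hx.eq_add_mul_of_mapsTo le_rfl hfδ (by rwa [zero_sub]) (by rwa [zero_add]), hx0]
    ring
  have hplateau : MapsTo x (Icc (1 + c / δ - 1) (1 + c / δ)) (Icc a (2 * a - c)) := by
    rw [add_sub_cancel_left]
    refine (hx.mapsTo_Icc_of_descent hγ.le hδ.le he0 he1
      (hf.mono_left (Icc_subset_Icc_left ?_)) hdescent).mono_right (Icc_subset_Icc ?_ ?_) <;>
    linarith
  obtain ⟨τ, hτ, hxτ, hsegτ⟩ := hx.exists_eq_of_mapsTo_Icc hγ (by linarith) hfγ hplateau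
  refine ⟨τ, by linarith, fun t ht => ?_⟩
  rw [hx.eq_add_mul_of_mapsTo (by linarith) hfγ hsegτ ht, hxτ]
  ring

section AffineCrossing

variable {γ r σ : ℝ}

theorem mapsTo_Icc_before_peak (hx : IsSolOn f x) (hγ : 0 ≤ γ) (hr : r ≤ 1) (hrσ : r ≤ σ + 1)
    (hf : MapsTo f (Icc (-(γ * r)) 0) (Icc 0 γ))
    (hcross : ∀ t ∈ Icc (σ - r) (σ - r + 1), x t = γ * (t - σ)) :
    MapsTo x (Icc (σ + 1 - r) (σ + 1)) (Icc (γ * (1 - r)) γ) := by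
  rintro t ⟨ht₁, ht₂⟩
  have hslope : ∀ u ∈ Ioo (σ + 1 - r - 1) (t - 1), f (x u) ∈ Icc 0 γ := by
    rintro u ⟨hu₁, hu₂⟩
    rw [hcross u ⟨by linarith, by linarith⟩]
    exact hf ⟨by nlinarith, by nlinarith⟩
  have hchange := hx.sub_mem_Icc (by linarith) ht₁ hslope
  rw [hcross (σ + 1 - r) ⟨by linarith, by linarith⟩] at hchange
  constructor <;> nlinarith [hchange.1, hchange.2]

theorem symm_of_affine_crossing (hx : IsSolOn f x) (hodd : f.Odd) (hr : 2 * r ≤ 1)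
    (hrσ : r ≤ σ + 1) (hcross : ∀ t ∈ Icc (σ - r) (σ - r + 1), x t = γ * (t - σ)) {v : ℝ}
    (hv : v ∈ Icc 0 r) : x (σ + 1 + v) = x (σ + 1 - v) := by
  refine hx.symm_of_antisymm hodd hrσ (fun u hu => ?_) hv
  obtain ⟨hu₁, hu₂⟩ := hu
  rw [hcross (σ + u) ⟨by linarith, by linarith⟩, hcross (σ - u) ⟨by linarith, by linarith⟩]
  ring

theorem mapsTo_Icc_after_peak (hx : IsSolOn f x) (hodd : f.Odd) (hγ : 0 ≤ γ) (hr0 : 0 ≤ r)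
    (hr : 3 * r ≤ 1) (hrσ : r ≤ σ + 1) (hf : MapsTo f (Icc 0 (2 * (γ * r))) (Icc (-γ) 0))
    (hcross : ∀ t ∈ Icc (σ - r) (σ - r + 1), x t = γ * (t - σ)) :
    MapsTo x (Icc (σ + 1 + r) (σ + 1 + 2 * r)) (Icc (γ * (1 - 2 * r)) (γ * (1 - r))) := by
  rintro t ⟨ht₁, ht₂⟩
  have hslope : ∀ u ∈ Ioo (σ + 1 + r - 1) (t - 1), f (x u) ∈ Icc (-γ) 0 := by
    rintro u ⟨hu₁, hu₂⟩
    rw [hcross u ⟨by linarith, by linarith⟩]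
    exact hf ⟨by nlinarith, by nlinarith⟩
  have hchange := hx.sub_mem_Icc (by linarith) ht₁ hslope
  rw [hx.symm_of_affine_crossing hodd (by linarith) hrσ hcross (right_mem_Icc.2 hr0),
    hcross (σ + 1 - r) ⟨by linarith, by linarith⟩] at hchange
  constructor <;> nlinarith [hchange.1, hchange.2]

theorem mapsTo_Icc_of_affine_crossing (hx : IsSolOn f x) (hodd : f.Odd) (hγ : 0 ≤ γ)
    (hr0 : 0 ≤ r) (hr : 4 * r ≤ 1) (hrσ : r ≤ σ + 1)
    (hf : MapsTo f (Icc 0 (2 * (γ * r))) (Icc (-γ) 0))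
    (hcross : ∀ t ∈ Icc (σ - r) (σ - r + 1), x t = γ * (t - σ)) :
    MapsTo x (Icc (σ + 2 * r) (σ + 1 + 2 * r)) (Icc (2 * (γ * r)) γ) := by
  have hγr : 0 ≤ γ * r := mul_nonneg hγ hr0
  have hfneg : MapsTo f (Icc (-(γ * r)) 0) (Icc 0 γ) := fun y hy => by
    have h : f (-y) ∈ Icc (-γ) 0 := hf ⟨by linarith [hy.2], by linarith [hy.1]⟩
    rw [hodd] at h
    exact ⟨by linarith [h.2], by linarith [h.1]⟩
  have hbefore := hx.mapsTo_Icc_before_peak hγ (by linarith) hrσ hfneg hcross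
  have hband : Icc (γ * (1 - r)) γ ⊆ Icc (2 * (γ * r)) γ := Icc_subset_Icc_left (by nlinarith)
  rintro t ⟨ht₁, ht₂⟩
  rcases le_total t (σ + 1 - r) with hcrossing | hcrossing
  · rw [hcross t ⟨by linarith, by linarith⟩]
    constructor <;> nlinarith
  rcases le_total t (σ + 1) with hrise | hrise
  · exact hband (hbefore ⟨hcrossing, hrise⟩)
  rcases le_total t (σ + 1 + r) with hfall | hfall
  · have hsymm := hx.symm_of_affine_crossing hodd (by linarith) hrσ hcross (v := t - (σ + 1))
      ⟨by linarith, by linarith⟩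
    rw [add_sub_cancel] at hsymm
    exact hsymm ▸ hband (hbefore ⟨by linarith, by linarith⟩)
  · exact Icc_subset_Icc (by nlinarith) (by nlinarith) (hx.mapsTo_Icc_after_peak hodd hγ hr0
      (by linarith) hrσ hf hcross ⟨hfall, ht₂⟩)

end AffineCrossing

theorem exists_mapsTo_Icc_of_affine_ascent (hx : IsSolOn f x) (hodd : f.Odd) {a γ τ : ℝ}
    (ha : 0 < a) (haγ : 4 * a ≤ γ) (hτ : 0 ≤ τ) (hf : MapsTo f (Icc 0 (2 * a)) (Icc (-γ) 0))
    (hascent : ∀ t ∈ Icc τ (τ + 1), x t = γ * (t - τ) - a) :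
    ∃ σ, τ + 1 < σ ∧ MapsTo x (Icc (σ - 1) σ) (Icc (2 * a) γ) := by
  have hγ : 0 < γ := by linarith
  set r := a / γ
  have hγr : γ * r = a := mul_div_cancel₀ a hγ.ne'
  have hr0 : 0 < r := div_pos ha hγ
  have hr : 4 * r ≤ 1 := by nlinarith
  have hcross : ∀ t ∈ Icc (τ + r - r) (τ + r - r + 1), x t = γ * (t - (τ + r)) := fun t ht => by
    rw [add_sub_cancel_right] at ht
    rw [hascent t ht, ← hγr]
    ring
  refine ⟨τ + r + 1 + 2 * r, by linarith, ?_⟩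
  rw [add_right_comm _ 1, add_sub_cancel_right, add_right_comm _ _ 1, ← hγr]
  exact hx.mapsTo_Icc_of_affine_crossing hodd hγ.le hr0.le hr (by linarith) (by rwa [hγr]) hcross

theorem add_eq_neg_of_mapsTo (hx : IsSolOn f x) (hodd : f.Odd) {S : Set ℝ} {k τ : ℝ} (hτ : 0 ≤ τ)
    (hf : ∀ y ∈ S, f y = k) (hneg_seg : MapsTo (-x) (Icc (-1) 0) S)
    (hsegτ : MapsTo x (Icc (τ - 1) τ) S) (hxτ : x τ = -x 0) {t : ℝ} (ht : 0 ≤ t) :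
    x (t + τ) = -x t := by
  refine (hx.comp_add_const hτ).eqOn_Ici (hx.neg hodd) (by simp [hxτ]) (fun s hs => ?_) ht
  rw [hf _ (hneg_seg (Ioo_subset_Icc_self hs)),
    hf _ (hsegτ ⟨by linarith [hs.1], by linarith [hs.2]⟩)]

end IsSolOn

theorem statement_12_general {f : ℝ → ℝ} {a c δ γ : ℝ} (ha : 0 < a) (hc : 0 < c) (hδ : 0 < δ)
    (haγ : 4 * a ≤ γ) (hcδ : δ + c / δ * γ ≤ a) (hf : HypH'' f a c δ γ)
    (hf_nonpos : ∀ y ∈ Icc 0 (2 * a), f y ≤ 0) {x : ℝ → ℝ} (hx : IsSolOn f x)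
    (hx0 : x 0 = -(2 * a)) (hseg : ∀ s ∈ Icc (-1 : ℝ) 0, -γ ≤ x s ∧ x s ≤ -(2 * a)) :
    ∃ τ₃ : ℝ, 2 < τ₃ ∧ (∀ t : ℝ, 0 ≤ t → x (t + τ₃) = -x t) ∧
      ∀ t : ℝ, 0 ≤ t → x (t + 2 * τ₃) = x t := by
  obtain ⟨hodd, hf_abs, hfγ, hfδ⟩ := hf
  have hf_maps : MapsTo f (Icc 0 (2 * a)) (Icc (-γ) 0) :=
    fun y hy => ⟨(abs_le.1 (hf_abs y hy)).1, hf_nonpos y hy⟩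
  have hneg_seg : MapsTo (-x) (Icc (-1) 0) (Icc (2 * a) γ) :=
    fun s hs => ⟨le_neg.1 (hseg s hs).2, neg_le.1 (hseg s hs).1⟩
  obtain ⟨τ, hτ, hdescent⟩ := (hx.neg hodd).exists_affine_descent ha hc hδ haγ hcδ hf_maps hfγ hfδ
    (neg_eq_iff_eq_neg.2 hx0) hneg_seg
  have hascent : ∀ t ∈ Icc τ (τ + 1), x t = γ * (t - τ) - a :=
    fun t ht => by linarith [hdescent t ht, Pi.neg_apply x t]
  obtain ⟨σ, hσ, hsegσ⟩ :=
    hx.exists_mapsTo_Icc_of_affine_ascent hodd ha haγ (by linarith) hf_maps hascent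
  obtain ⟨τ₃, hτ₃, hxτ₃, hsegτ₃⟩ := hx.exists_eq_of_mapsTo_Icc hδ (by linarith) hfδ hsegσ
  have hhalf : ∀ t, 0 ≤ t → x (t + τ₃) = -x t := fun t ht =>
    hx.add_eq_neg_of_mapsTo hodd (by linarith) hfδ hneg_seg hsegτ₃ (by rw [hxτ₃, hx0, neg_neg]) ht
  refine ⟨τ₃, by linarith, hhalf, fun t ht => ?_⟩
  rw [two_mul, ← add_assoc, hhalf _ (by linarith), hhalf t ht, neg_neg]

theorem statement_12 (f : ℝ → ℝ) (a c δ γ : ℝ)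
    (ha : 0 < a) (hc : 0 < c) (hδ : 0 < δ) (hγ : 0 < γ)
    (hi : c < min a δ) (hii : 4 * a ≤ γ ∧ δ < γ) (hiii : δ + (c / δ) * γ ≤ a)
    (hH : HypH f) (hH'' : HypH'' f a c δ γ)
    (x : ℝ → ℝ) (hx : IsSolOn f x) (hx0 : x 0 = -(2 * a))
    (hseg : ∀ s ∈ Icc (-1 : ℝ) 0, -γ ≤ x s ∧ x s ≤ -(2 * a)) :
    ∃ τ₃ : ℝ, 2 < τ₃ ∧ (∀ t : ℝ, 0 ≤ t → x (t + τ₃) = -x t) ∧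
      ∀ t : ℝ, 0 ≤ t → x (t + 2 * τ₃) = x t := by
  exact statement_12_general ha hc hδ hii.1 hiii hH''
    (fun _ hy => nonpos_of_odd_of_mul_neg hH''.1 hH.2.1 hy.1) hx hx0 hseg
end

section
/- Given reals a, c, δ, γ > 0 satisfying (i) c < min(a, δ), (ii) γ ≥ 4a and γ > δ, (iii) δ + (c/δ)·γ ≤ a, suppose f satisfies (H) and (H''), and additionally -π/2 < f'(0) < 0. Then the equation x'(t) = f(x(t-1)) has at least two distinct SOP solutions p and q (q is not a time translate of p), each with minimal period equal to z'' - z for some three consecutive zeros z < z' < z'' of it. -/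
/-!
Both solutions are Kaplan–Yorke solutions. With `g = -f`, these come from the `4`-periodic solutions
of the planar Hamiltonian system `x' = -g y`, `y' = g x`, where `y t = x (t - 1)`, whose energy is
`G x + G y` with `G x = ∫₀ˣ g`.

The signed coordinate `r = sgn x * √(G x)` turns the energy levels into circles. Its inverse
`x = S r` is `C¹` also at `0`, because `g` has a positive derivative there; write `s = S'`. On the
circle of radius `ρ` a quarter turn takes the time `Q ρ = ½ ∫₀^{π/2} s (ρ cos θ) * s (ρ sin θ) dθ`,
and every `ρ > 0` with `Q ρ = 1` gives a Kaplan–Yorke solution of maximum `S ρ`. The continuous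
function `Q` takes the value `1` twice:

* `Q 0 = π / (2 |f'(0)|) > 1`;
* `Q ρ < 1` for some `ρ` whose amplitude `S ρ` lies in `[a, 2a - c]`: the period is the derivative
  of the enclosed area with respect to the energy, and the area swept in the first quadrant between
  the amplitudes `a` and `2a - c` is smaller than the gain of energy `γ (a - c)`;
* `Q ρ ≥ 1` for the amplitude `S ρ = γ`: the time spent where `x ≥ 2a`, at the low speed
  `g x = δ`, is already long enough.

A solution with values in `[-γ, γ]` does not see `f` outside this interval, so `f` may be taken
constant beyond it; this makes `G` unbounded and `S` globally defined.
-/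

open Set Filter

/-! ### Calculus -/

section Calculus

open Real Topology intervalIntegral

theorem exists_orderIso_hasDerivAt_inv {F F' : ℝ → ℝ} (hF : ∀ x, HasDerivAt F (F' x) x)
    (hpos : ∀ x, 0 < F' x) (htop : Tendsto F atTop atTop) (hbot : Tendsto F atBot atBot) :
    ∃ e : ℝ ≃o ℝ, (∀ y, F (e y) = y) ∧ ∀ y, HasDerivAt e (F' (e y))⁻¹ y := by
  have hmono : StrictMono F := strictMono_of_hasDerivAt_pos hF hpos
  have hcont : Continuous F := continuous_iff_continuousAt.2 fun x ↦ (hF x).continuousAt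
  let e := (hmono.orderIsoOfSurjective F (hcont.surjective htop hbot)).symm
  have hFe : ∀ y, F (e y) = y := e.symm_apply_apply
  exact ⟨e, hFe, fun y ↦ (hF _).of_local_left_inverse e.continuous.continuousAt (hpos _).ne'
    (Eventually.of_forall hFe)⟩

/-- The solution of `θ' = 1 / W θ` is the inverse of `x ↦ ∫₀ˣ W`. -/
theorem exists_orderIso_hasDerivAt_inv_of_periodic {W : ℝ → ℝ} {T : ℝ} (hW : Continuous W)
    (hpos : ∀ θ, 0 < W θ) (hper : W.Periodic T) (hT : 0 < T) :
    ∃ Θ : ℝ ≃o ℝ, (∀ t, HasDerivAt Θ (W (Θ t))⁻¹ t) ∧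
      ∀ t, Θ (t + ∫ θ in (0 : ℝ)..T, W θ) = Θ t + T := by
  have hint : IntervalIntegrable W MeasureTheory.volume 0 T := hW.intervalIntegrable 0 T
  have htime (x : ℝ) : HasDerivAt (fun x ↦ ∫ θ in (0 : ℝ)..x, W θ) (W x) x :=
    (hW.integral_hasStrictDerivAt 0 x).hasDerivAt
  obtain ⟨Θ, hinv, hderiv⟩ := exists_orderIso_hasDerivAt_inv htime hpos
    (hper.tendsto_atTop_intervalIntegral_of_pos' hint hpos hT)
    (hper.tendsto_atBot_intervalIntegral_of_pos' hint hpos hT)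
  refine ⟨Θ, hderiv, fun t ↦ ?_⟩
  apply (strictMono_of_hasDerivAt_pos htime hpos).injective
  beta_reduce
  rw [hper.intervalIntegral_add_eq_add 0 (Θ t) fun _ _ ↦ hW.intervalIntegrable _ _, zero_add,
    hinv, hinv]

theorem add_pi_le_of_cos_eq_zero {x y : ℝ} (hx : cos x = 0) (hy : cos y = 0) (hxy : x < y) :
    x + π ≤ y := by
  obtain ⟨m, rfl⟩ := cos_eq_zero_iff.1 hx
  obtain ⟨n, rfl⟩ := cos_eq_zero_iff.1 hy
  have hmn : m < n := by
    have : (m : ℝ) < n := by nlinarith [pi_pos]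
    exact_mod_cast this
  have : (m : ℝ) + 1 ≤ n := by exact_mod_cast hmn
  nlinarith [pi_pos]

theorem two_pi_le_of_cos_eq_one {x : ℝ} (hx : cos x = 1) (hpos : 0 < x) : 2 * π ≤ x := by
  by_contra! hlt
  exact hpos.ne' ((cos_eq_one_iff_of_lt_of_lt (by linarith) hlt).1 hx)

theorem exists_angle_le_pi_div_four {b ρ : ℝ} (hb : 0 ≤ b) (hρ : 0 < ρ) (hbρ : b ≤ ρ)
    (hρb : ρ ^ 2 ≤ 2 * b ^ 2) :
    ∃ α, 0 ≤ α ∧ α ≤ π / 4 ∧ ρ * cos α = b ∧ (ρ * sin α) ^ 2 = ρ ^ 2 - b ^ 2 := by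
  have hle : b / ρ ≤ 1 := (div_le_one hρ).2 hbρ
  have hcos : cos (arccos (b / ρ)) = b / ρ :=
    cos_arccos (by linarith [div_nonneg hb hρ.le]) hle
  have hmul : ρ * cos (arccos (b / ρ)) = b := by rw [hcos, mul_div_cancel₀ _ hρ.ne']
  refine ⟨arccos (b / ρ), arccos_nonneg _, ?_, hmul, ?_⟩
  · rw [arccos_le_pi_div_four, le_div_iff₀ hρ]
    refine le_of_sq_le_sq ?_ hb
    rw [mul_pow, div_pow, sq_sqrt zero_le_two]
    linarith
  · linear_combination ρ ^ 2 * sin_sq_add_cos_sq (arccos (b / ρ)) -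
      (ρ * cos (arccos (b / ρ)) + b) * hmul

theorem setIntegral_polarCoord_symm_image {F : ℝ × ℝ → ℝ} (hF : Continuous F) {r₁ r₂ α β : ℝ}
    (hr₁ : 0 < r₁) (hr : r₁ ≤ r₂) (hα : -π < α) (hαβ : α ≤ β) (hβ : β < π) :
    ∫ p in polarCoord.symm '' (Icc r₁ r₂ ×ˢ Icc α β), F p =
      ∫ r in r₁..r₂, r * ∫ θ in α..β, F (r * cos θ, r * sin θ) := by
  have hcompact : IsCompact (Icc r₁ r₂ ×ˢ Icc α β) := isCompact_Icc.prod isCompact_Icc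
  have htarget : Icc r₁ r₂ ×ˢ Icc α β ⊆ polarCoord.target := by
    rw [polarCoord_target]
    exact prod_mono (fun r h ↦ hr₁.trans_le h.1) (Icc_subset_Ioo hα hβ)
  have hcont : Continuous fun p : ℝ × ℝ ↦ |p.1| * F (polarCoord.symm p) :=
    continuous_fst.abs.mul (hF.comp continuous_polarCoord_symm)
  have hint := hcont.continuousOn.integrableOn_compact (μ := MeasureTheory.volume) hcompact
  rw [MeasureTheory.integral_image_eq_integral_abs_det_fderiv_smul MeasureTheory.volume
    hcompact.measurableSet (fun p _ ↦ (hasFDerivAt_polarCoord_symm p).hasFDerivWithinAt)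
    (polarCoord.symm.injOn.mono htarget)]
  simp only [det_fderivPolarCoordSymm, smul_eq_mul]
  rw [MeasureTheory.Measure.volume_eq_prod] at hint ⊢
  rw [MeasureTheory.setIntegral_prod _ hint, MeasureTheory.integral_Icc_eq_integral_Ioc,
    ← integral_of_le hr]
  refine integral_congr fun r hmem ↦ ?_
  rw [uIcc_of_le hr] at hmem
  simp only [polarCoord_symm_apply]
  rw [MeasureTheory.integral_Icc_eq_integral_Ioc, ← integral_of_le hαβ, integral_const_mul,
    abs_of_pos (hr₁.trans_le hmem.1)]

theorem polarCoord_symm_image_subset_square_sdiff_corner {r₁ r₂ : ℝ} (hr₁ : 0 ≤ r₁) :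
    polarCoord.symm '' (Icc r₁ r₂ ×ˢ Icc 0 (π / 2)) ⊆
      (Icc 0 r₂ ×ˢ Icc 0 r₂) \ (Ioc (r₂ / √2) r₂ ×ˢ Ioc (r₂ / √2) r₂) := by
  rintro _ ⟨⟨r, θ⟩, ⟨⟨hr, hr₂⟩, hθ, hθ₂⟩, rfl⟩
  have hr0 : 0 ≤ r := hr₁.trans hr
  have hcos : 0 ≤ cos θ := cos_nonneg_of_mem_Icc ⟨by linarith, hθ₂⟩
  have hsin : 0 ≤ sin θ := sin_nonneg_of_nonneg_of_le_pi hθ (by linarith [pi_pos])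
  refine ⟨⟨⟨mul_nonneg hr0 hcos, ?_⟩, mul_nonneg hr0 hsin, ?_⟩, ?_⟩
  · exact (mul_le_of_le_one_right hr0 (cos_le_one θ)).trans hr₂
  · exact (mul_le_of_le_one_right hr0 (sin_le_one θ)).trans hr₂
  rintro ⟨⟨hx, -⟩, hy, -⟩
  rw [polarCoord_symm_apply] at hx hy
  have hcorner : 0 ≤ r₂ / √2 := div_nonneg (hr0.trans hr₂) (sqrt_nonneg 2)
  have hx2 := pow_lt_pow_left₀ hx hcorner two_ne_zero
  have hy2 := pow_lt_pow_left₀ hy hcorner two_ne_zero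
  rw [div_pow, sq_sqrt zero_le_two] at hx2 hy2
  have hnorm : (r * cos θ) ^ 2 + (r * sin θ) ^ 2 = r ^ 2 := by
    linear_combination r ^ 2 * sin_sq_add_cos_sq θ
  have hle : r ^ 2 ≤ r₂ ^ 2 := pow_le_pow_left₀ hr0 hr₂ 2
  linarith

end Calculus

/-! ### Kaplan–Yorke solutions -/

section KaplanYorke

open Real

variable {f p : ℝ → ℝ}

theorem IsKY.congr (h : IsKY f p) {g : ℝ → ℝ} (hfg : ∀ t, f (p t) = g (p t)) : IsKY g p :=
  ⟨⟨fun t ↦ hfg (t - 1) ▸ h.1.1 t, h.1.2⟩, h.2⟩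

theorem IsKY.periodThreeZeros (h : IsKY f p) : PeriodThreeZeros p := by
  obtain ⟨⟨hsol, -, -, hsep⟩, hper, hanti⟩ := h
  have hcont : Continuous p := continuous_iff_continuousAt.2 fun t ↦ (hsol t).continuousAt
  have hshift (t : ℝ) : p (t + 2) = -p t := by rw [hanti, add_sub_cancel_right]
  obtain ⟨z, hz⟩ : ∃ z, p z = 0 := by
    have hp2 : p 2 = -p 0 := by simpa using hshift 0
    have h0 : (0 : ℝ) ∈ uIcc (p 0) (p 2) := by
      rw [hp2, mem_uIcc]
      rcases le_total 0 (p 0) with hp | hp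
      · exact .inr ⟨by linarith, hp⟩
      · exact .inl ⟨hp, by linarith⟩
    obtain ⟨z, -, hz⟩ := intermediate_value_uIcc hcont.continuousOn h0
    exact ⟨z, hz⟩
  have hzero {w : ℝ} (hw : p w = 0) : p (w + 2) = 0 := by rw [hshift, hw, neg_zero]
  -- A zero of `p` in between would be within distance `1` of one of the end points.
  have hbetween {w : ℝ} (hw : p w = 0) : ∀ t ∈ Ioo w (w + 2), p t ≠ 0 := by
    intro t ht hpt
    have hleft := hsep t w hpt hw ht.1.ne'
    have hright := hsep (w + 2) t (hzero hw) hpt ht.2.ne'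
    rw [abs_of_pos (sub_pos.2 ht.1)] at hleft
    rw [abs_of_pos (sub_pos.2 ht.2)] at hright
    linarith
  refine ⟨z, z + 2, z + 2 + 2, by linarith, by linarith, hz, hzero hz, hzero (hzero hz), ?_, ?_⟩
  · rintro t (ht | ht)
    exacts [hbetween hz t ht, hbetween (hzero hz) t ht]
  · rwa [show z + 2 + 2 - z = 4 by ring]

theorem isKY_comp_cos {φ : ℝ → ℝ} {Θ : ℝ ≃o ℝ} (hinj : φ.Injective) (hodd : φ.Odd)
    (hΘ : ∀ t, Θ (t + 2) = Θ t + π)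
    (hsol : ∀ t, HasDerivAt (fun t ↦ φ (cos (Θ t))) (f (φ (cos (Θ (t - 1))))) t) :
    IsKY f fun t ↦ φ (cos (Θ t)) := by
  have hΘ4 (t : ℝ) : Θ (t + 4) = Θ t + 2 * π := by
    rw [show t + 4 = t + 2 + 2 by ring, hΘ, hΘ]
    ring
  have hperiodic (t : ℝ) : φ (cos (Θ (t + 4))) = φ (cos (Θ t)) := by rw [hΘ4, cos_add_two_pi]
  have hzero {t : ℝ} : φ (cos (Θ t)) = 0 ↔ cos (Θ t) = 0 := hinj.eq_iff' hodd.map_zero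
  have hsep {z z' : ℝ} (hz : φ (cos (Θ z)) = 0) (hz' : φ (cos (Θ z')) = 0) (hlt : z < z') :
      z + 2 ≤ z' := by
    rw [← Θ.le_iff_le, hΘ]
    exact add_pi_le_of_cos_eq_zero (hzero.1 hz) (hzero.1 hz') (Θ.lt_iff_lt.2 hlt)
  refine ⟨⟨hsol, ⟨4, four_pos, hperiodic⟩, ⟨Θ.symm 0, Θ.symm (π / 2), ?_⟩, ?_⟩,
    ⟨four_pos, hperiodic, fun T hT hper ↦ ?_⟩, fun t ↦ ?_⟩
  · simp [hinj.eq_iff]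
  · intro z z' hz hz' hne
    rcases lt_or_gt_of_ne hne with hlt | hlt
    · rw [abs_of_neg (sub_neg.2 hlt)]
      linarith [hsep hz hz' hlt]
    · rw [abs_of_pos (sub_pos.2 hlt)]
      linarith [hsep hz' hz hlt]
  · have hmax : cos (Θ (Θ.symm 0 + T)) = 1 := by rw [hinj (hper _), Θ.apply_symm_apply, cos_zero]
    have hΘpos : 0 < Θ (Θ.symm 0 + T) := by
      rw [← Θ.symm_apply_lt]
      linarith
    have hle : Θ (Θ.symm 0 + 4) ≤ Θ (Θ.symm 0 + T) := by
      rw [hΘ4, Θ.apply_symm_apply, zero_add]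
      exact two_pi_le_of_cos_eq_one hmax hΘpos
    linarith [Θ.le_iff_le.1 hle]
  · beta_reduce
    have hanti := hΘ (t - 2)
    rw [sub_add_cancel] at hanti
    rw [hanti, cos_add_pi, hodd]

end KaplanYorke

/-! ### Energy and normal coordinate -/

/-- The potential energy `∫₀ˣ g` of the force `-g`. -/
noncomputable def energy (g : ℝ → ℝ) (x : ℝ) : ℝ :=
  ∫ t in (0 : ℝ)..x, g t

section Energy

open intervalIntegral

variable {g : ℝ → ℝ} {x y C : ℝ}

theorem energy_zero (g : ℝ → ℝ) : energy g 0 = 0 :=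
  integral_same

theorem hasDerivAt_energy (hg : Continuous g) (x : ℝ) : HasDerivAt (energy g) (g x) x :=
  (hg.integral_hasStrictDerivAt 0 x).hasDerivAt

theorem continuous_energy (hg : Continuous g) : Continuous (energy g) :=
  continuous_iff_continuousAt.2 fun x ↦ (hasDerivAt_energy hg x).continuousAt

theorem energy_sub_energy (hg : Continuous g) (x y : ℝ) :
    energy g y - energy g x = ∫ t in x..y, g t :=
  integral_interval_sub_left (hg.intervalIntegrable _ _) (hg.intervalIntegrable _ _)

theorem energy_sub_le (hg : Continuous g) (hxy : x ≤ y) (hC : ∀ t ∈ Icc x y, g t ≤ C) :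
    energy g y - energy g x ≤ C * (y - x) := by
  rw [energy_sub_energy hg]
  calc ∫ t in x..y, g t ≤ ∫ _ in x..y, C :=
        integral_mono_on hxy (hg.intervalIntegrable _ _) (by simp) hC
    _ = C * (y - x) := by rw [integral_const, smul_eq_mul, mul_comm]

theorem le_energy_sub (hg : Continuous g) (hxy : x ≤ y) (hC : ∀ t ∈ Icc x y, C ≤ g t) :
    C * (y - x) ≤ energy g y - energy g x := by
  rw [energy_sub_energy hg]
  calc C * (y - x) = ∫ _ in x..y, C := by rw [integral_const, smul_eq_mul, mul_comm]
    _ ≤ ∫ t in x..y, g t := integral_mono_on hxy (by simp) (hg.intervalIntegrable _ _) hC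

theorem tendsto_energy_atTop (hg : Continuous g) (hC : 0 < C) (hle : ∀ t, x ≤ t → C ≤ g t) :
    Tendsto (energy g) atTop atTop := by
  have hlin : Tendsto (fun y ↦ energy g x + C * (y - x)) atTop atTop :=
    tendsto_atTop_add_const_left _ _
      ((tendsto_atTop_add_const_right _ (-x) tendsto_id).const_mul_atTop hC)
  refine tendsto_atTop_mono' _ ?_ hlin
  filter_upwards [eventually_ge_atTop x] with y hxy
  linarith [le_energy_sub hg hxy fun t ht ↦ hle t ht.1]

end Energy

/-- An odd restoring force law: `-g` always points towards the equilibrium `0`. -/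
structure IsRestoring (g : ℝ → ℝ) : Prop where
  continuous : Continuous g
  odd : g.Odd
  pos : ∀ x, 0 < x → 0 < g x

/-- The law `g`, kept constant outside `[-M, M]`; for `M > 0` this makes the energy unbounded. -/
def saturate (g : ℝ → ℝ) (M x : ℝ) : ℝ :=
  g (max (-M) (min x M))

theorem saturate_of_abs_le (g : ℝ → ℝ) {M x : ℝ} (hx : |x| ≤ M) : saturate g M x = g x := by
  rw [saturate, min_eq_left (abs_le.1 hx).2, max_eq_right (abs_le.1 hx).1]

theorem hasDerivAt_saturate_zero {g : ℝ → ℝ} {k M : ℝ} (hM : 0 < M) (hk : HasDerivAt g k 0) :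
    HasDerivAt (saturate g M) k 0 := by
  refine hk.congr_of_eventuallyEq ?_
  filter_upwards [Icc_mem_nhds (neg_neg_of_pos hM) hM] with x hx
  exact saturate_of_abs_le g (abs_le.2 hx)

/-- The signed square root of the energy of `g`, whose inverse is the normal coordinate. -/
noncomputable def energyRoot (g : ℝ → ℝ) (x : ℝ) : ℝ :=
  SignType.sign x * √(energy g x)

/-- The derivative of `energyRoot g`, where `k` stands for the derivative of `g` at `0`. The value
at `0` is the limit of the quotient, since `energy g x ∼ k * x ^ 2 / 2`. -/
noncomputable def energyRootDeriv (g : ℝ → ℝ) (k : ℝ) : ℝ → ℝ :=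
  Function.update (fun x ↦ |g x| / (2 * √(energy g x))) 0 √(k / 2)

theorem tendsto_energyRoot_atTop {g : ℝ → ℝ} (htop : Tendsto (energy g) atTop atTop) :
    Tendsto (energyRoot g) atTop atTop := by
  refine (Real.tendsto_sqrt_atTop.comp htop).congr' ?_
  filter_upwards [eventually_gt_atTop 0] with x hx
  simp [energyRoot, hx]

namespace IsRestoring

open Topology

variable {g : ℝ → ℝ} {k : ℝ}

protected theorem saturate (hg : IsRestoring g) {M : ℝ} (hM : 0 < M) :
    IsRestoring (saturate g M) where
  continuous := hg.continuous.comp (by fun_prop)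
  odd x := by
    have hclamp : max (-M) (min (-x) M) = -max (-M) (min x M) := by grind
    rw [saturate, hclamp, hg.odd, saturate]
  pos x hx := hg.pos _ (lt_max_of_lt_right (lt_min hx hM))

theorem abs_apply_pos (hg : IsRestoring g) {x : ℝ} (hx : x ≠ 0) : 0 < |g x| := by
  rcases lt_or_gt_of_ne hx with hneg | hpos
  · rw [← abs_neg, ← hg.odd]
    exact abs_pos.2 (hg.pos _ (neg_pos.2 hneg)).ne'
  · exact abs_pos.2 (hg.pos x hpos).ne'

theorem sign_mul (hg : IsRestoring g) (x : ℝ) : SignType.sign x * g x = |g x| := by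
  rcases lt_trichotomy x 0 with hneg | rfl | hpos
  · have := hg.pos (-x) (neg_pos.2 hneg)
    rw [hg.odd] at this
    rw [sign_neg hneg, abs_of_neg (neg_pos.1 this), SignType.coe_neg_one, neg_one_mul]
  · simp [hg.odd.map_zero]
  · rw [sign_pos hpos, abs_of_pos (hg.pos x hpos), SignType.coe_one, one_mul]

theorem even_energy (hg : IsRestoring g) : (energy g).Even := by
  intro x
  have hneg : ∫ t in (0 : ℝ)..x, g (-t) = ∫ t in (-x)..(-0), g t :=
    intervalIntegral.integral_comp_neg (fun t ↦ g t)
  simp only [hg.odd _, intervalIntegral.integral_neg, neg_zero] at hneg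
  rw [energy, energy, intervalIntegral.integral_symm, ← hneg, neg_neg]

theorem energy_pos (hg : IsRestoring g) {x : ℝ} (hx : x ≠ 0) : 0 < energy g x := by
  have hpos {y : ℝ} (hy : 0 < y) : 0 < energy g y :=
    intervalIntegral.intervalIntegral_pos_of_pos_on (hg.continuous.intervalIntegrable _ _)
      (fun t ht ↦ hg.pos t ht.1) hy
  rcases lt_or_gt_of_ne hx with hneg | hx
  · exact hg.even_energy x ▸ hpos (neg_pos.2 hneg)
  · exact hpos hx

theorem odd_energyRoot (hg : IsRestoring g) : (energyRoot g).Odd := by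
  intro x
  simp [energyRoot, hg.even_energy x, Left.sign_neg]

theorem energyRoot_sq (hg : IsRestoring g) (x : ℝ) : energyRoot g x ^ 2 = energy g x := by
  rcases eq_or_ne x 0 with rfl | hx
  · simp [energyRoot, energy_zero]
  · have hsign : ((SignType.sign x : ℝ)) ^ 2 = 1 := by
      rcases lt_or_gt_of_ne hx with hx | hx <;> simp [hx]
    rw [energyRoot, mul_pow, hsign, one_mul, Real.sq_sqrt (hg.energy_pos hx).le]

theorem continuousAt_energyRoot_zero (hg : IsRestoring g) : ContinuousAt (energyRoot g) 0 := by
  have hsqrt : Tendsto (fun x ↦ √(energy g x)) (𝓝 0) (𝓝 0) := by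
    simpa [energy_zero] using (continuous_energy hg.continuous).sqrt.tendsto 0
  have hroot : energyRoot g 0 = 0 := by simp [energyRoot]
  rw [ContinuousAt, hroot, tendsto_zero_iff_abs_tendsto_zero]
  refine hsqrt.congr fun x ↦ ?_
  rw [Function.comp_apply, ← hg.energyRoot_sq, Real.sqrt_sq_eq_abs]

theorem hasDerivAt_energyRoot_of_ne (hg : IsRestoring g) {x : ℝ} (hx : x ≠ 0) :
    HasDerivAt (energyRoot g) (|g x| / (2 * √(energy g x))) x := by
  have hroot := ((hasDerivAt_energy hg.continuous x).sqrt
    (hg.energy_pos hx).ne').const_mul (SignType.sign x : ℝ)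
  rw [← mul_div_assoc, hg.sign_mul] at hroot
  have hsign : ∀ᶠ y in 𝓝 x, SignType.sign y = SignType.sign x := by
    rcases lt_or_gt_of_ne hx with hx | hx
    · filter_upwards [Iio_mem_nhds hx] with y hy
      rw [sign_neg hx, sign_neg hy]
    · filter_upwards [Ioi_mem_nhds hx] with y hy
      rw [sign_pos hx, sign_pos hy]
  refine hroot.congr_of_eventuallyEq ?_
  filter_upwards [hsign] with y hy
  rw [energyRoot, hy]

theorem tendsto_div_zero (hg : IsRestoring g) (hk : HasDerivAt g k 0) :
    Tendsto (fun x ↦ g x / x) (𝓝[≠] 0) (𝓝 k) := by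
  refine (hasDerivAt_iff_tendsto_slope.1 hk).congr fun x ↦ ?_
  simp [slope_def_field, hg.odd.map_zero]

theorem tendsto_energy_div_sq_zero (hg : IsRestoring g) (hk : HasDerivAt g k 0) :
    Tendsto (fun x ↦ energy g x / x ^ 2) (𝓝[≠] 0) (𝓝 (k / 2)) := by
  have hnum : Tendsto (energy g) (𝓝[≠] 0) (𝓝 0) :=
    ((continuous_energy hg.continuous).tendsto' 0 0 (energy_zero g)).mono_left nhdsWithin_le_nhds
  have hden : Tendsto (fun x : ℝ ↦ x ^ 2) (𝓝[≠] 0) (𝓝 0) :=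
    ((continuous_pow 2).tendsto' 0 0 (by simp)).mono_left nhdsWithin_le_nhds
  refine HasDerivAt.lhopital_zero_nhdsNE (f' := g) (g' := fun x ↦ 2 * x)
    (.of_forall (hasDerivAt_energy hg.continuous)) (.of_forall fun x ↦ ?_) ?_ hnum hden ?_
  · simpa using hasDerivAt_pow 2 x
  · filter_upwards [self_mem_nhdsWithin] with x hx
    exact mul_ne_zero two_ne_zero hx
  · refine ((hg.tendsto_div_zero hk).div_const 2).congr fun x ↦ ?_
    rw [div_div, mul_comm]

theorem tendsto_energyRootDeriv_zero (hg : IsRestoring g) (hk : HasDerivAt g k 0)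
    (hk0 : 0 < k) :
    Tendsto (fun x ↦ |g x| / (2 * √(energy g x))) (𝓝[≠] 0) (𝓝 √(k / 2)) := by
  have hlim : |k| / (2 * √(k / 2)) = √(k / 2) := by
    rw [abs_of_pos hk0, div_eq_iff (by positivity)]
    linarith [Real.mul_self_sqrt (half_pos hk0).le]
  have hquot : Tendsto (fun x ↦ |g x / x| / (2 * √(energy g x / x ^ 2))) (𝓝[≠] 0)
      (𝓝 (|k| / (2 * √(k / 2)))) :=
    (hg.tendsto_div_zero hk).abs.div ((hg.tendsto_energy_div_sq_zero hk).sqrt.const_mul 2)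
      (by positivity)
  rw [hlim] at hquot
  refine hquot.congr' ?_
  filter_upwards [self_mem_nhdsWithin] with x hx
  have hx' : 0 < |x| := abs_pos.2 hx
  have hE : 0 < √(energy g x) := Real.sqrt_pos.2 (hg.energy_pos hx)
  rw [Real.sqrt_div (hg.energy_pos hx).le, Real.sqrt_sq_eq_abs, abs_div]
  field_simp

theorem continuous_energyRootDeriv (hg : IsRestoring g) (hk : HasDerivAt g k 0) (hk0 : 0 < k) :
    Continuous (energyRootDeriv g k) := by
  refine continuous_iff_continuousAt.2 fun x ↦ ?_
  rcases eq_or_ne x 0 with rfl | hx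
  · exact continuousAt_update_same.2 (hg.tendsto_energyRootDeriv_zero hk hk0)
  · have hE : 0 < √(energy g x) := Real.sqrt_pos.2 (hg.energy_pos hx)
    exact (continuousAt_update_of_ne hx).2 (hg.continuous.continuousAt.abs.div
      (continuousAt_const.mul (continuous_energy hg.continuous).continuousAt.sqrt) (by positivity))

theorem energyRootDeriv_pos (hg : IsRestoring g) (hk0 : 0 < k) (x : ℝ) :
    0 < energyRootDeriv g k x := by
  rcases eq_or_ne x 0 with rfl | hx
  · simpa [energyRootDeriv] using hk0
  · rw [energyRootDeriv, Function.update_of_ne hx]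
    exact div_pos (hg.abs_apply_pos hx) (mul_pos two_pos (Real.sqrt_pos.2 (hg.energy_pos hx)))

theorem hasDerivAt_energyRoot (hg : IsRestoring g) (hk : HasDerivAt g k 0) (hk0 : 0 < k)
    (x : ℝ) : HasDerivAt (energyRoot g) (energyRootDeriv g k x) x := by
  have hne {y : ℝ} (hy : y ≠ 0) : HasDerivAt (energyRoot g) (energyRootDeriv g k y) y := by
    rw [energyRootDeriv, Function.update_of_ne hy]
    exact hg.hasDerivAt_energyRoot_of_ne hy
  rcases eq_or_ne x 0 with rfl | hx
  · exact hasDerivAt_of_hasDerivAt_of_ne (fun y hy ↦ hne hy) hg.continuousAt_energyRoot_zero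
      (hg.continuous_energyRootDeriv hk hk0).continuousAt
  · exact hne hx

theorem tendsto_energyRoot_atBot (hg : IsRestoring g) (htop : Tendsto (energy g) atTop atTop) :
    Tendsto (energyRoot g) atBot atBot := by
  refine (tendsto_neg_atTop_atBot.comp
    ((tendsto_energyRoot_atTop htop).comp tendsto_neg_atBot_atTop)).congr fun x ↦ ?_
  simp [hg.odd_energyRoot x]

end IsRestoring

/-- `S` is the change of variable, with derivative `s`, that turns the energy of `g` into the
square `r ^ 2`, so that the level sets of `energy g x + energy g y` become circles. -/
structure NormalCoord (g : ℝ → ℝ) (S : ℝ ≃o ℝ) (s : ℝ → ℝ) : Prop where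
  continuous_deriv : Continuous s
  deriv_pos : ∀ r, 0 < s r
  hasDerivAt : ∀ r, HasDerivAt S (s r) r
  odd : Function.Odd S
  energy_eq : ∀ r, energy g (S r) = r ^ 2

theorem IsRestoring.exists_normalCoord {g : ℝ → ℝ} {k : ℝ} (hg : IsRestoring g)
    (hk : HasDerivAt g k 0) (hk0 : 0 < k) (htop : Tendsto (energy g) atTop atTop) :
    ∃ S s, NormalCoord g S s := by
  obtain ⟨S, hRS, hS⟩ := exists_orderIso_hasDerivAt_inv (hg.hasDerivAt_energyRoot hk hk0)
    (hg.energyRootDeriv_pos hk0) (tendsto_energyRoot_atTop htop)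
    (hg.tendsto_energyRoot_atBot htop)
  have hinj : (energyRoot g).Injective :=
    (strictMono_of_hasDerivAt_pos (hg.hasDerivAt_energyRoot hk hk0)
      (hg.energyRootDeriv_pos hk0)).injective
  exact ⟨S, fun r ↦ (energyRootDeriv g k (S r))⁻¹,
    { continuous_deriv := ((hg.continuous_energyRootDeriv hk hk0).comp S.continuous).inv₀
        fun r ↦ (hg.energyRootDeriv_pos hk0 _).ne'
      deriv_pos := fun r ↦ inv_pos.2 (hg.energyRootDeriv_pos hk0 _)
      hasDerivAt := hS
      odd := fun r ↦ hinj (by rw [hRS, hg.odd_energyRoot, hRS])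
      energy_eq := fun r ↦ by rw [← hg.energyRoot_sq, hRS] }⟩

/-! ### The quarter time -/

/-- The time that the solution of `x' = -g y`, `y' = g x` needs for a quarter turn on the energy
level `ρ ^ 2`, written in the polar angle of the normal coordinates; `s` is the derivative of the
coordinate. -/
noncomputable def quarterTime (s : ℝ → ℝ) (ρ : ℝ) : ℝ :=
  ∫ θ in (0 : ℝ)..Real.pi / 2, s (ρ * Real.cos θ) * s (ρ * Real.sin θ) / 2

theorem continuous_quarterTime {s : ℝ → ℝ} (hs : Continuous s) : Continuous (quarterTime s) := by
  apply intervalIntegral.continuous_parametric_intervalIntegral_of_continuous'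
  unfold Function.uncurry
  fun_prop

namespace NormalCoord

open Real Topology intervalIntegral

variable {g s : ℝ → ℝ} {S : ℝ ≃o ℝ} {k ρ : ℝ}

theorem map_zero (h : NormalCoord g S s) : S 0 = 0 :=
  h.odd.map_zero

theorem symm_zero (h : NormalCoord g S s) : S.symm 0 = 0 := by
  rw [S.symm_apply_eq, h.map_zero]

theorem energy_eq_symm_sq (h : NormalCoord g S s) (x : ℝ) : energy g x = S.symm x ^ 2 := by
  rw [← h.energy_eq, S.apply_symm_apply]

theorem apply_mul_deriv (h : NormalCoord g S s) (hg : Continuous g) (r : ℝ) :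
    g (S r) * s r = 2 * r := by
  have hchain : HasDerivAt (fun r ↦ energy g (S r)) (g (S r) * s r) r :=
    (hasDerivAt_energy hg (S r)).comp r (h.hasDerivAt r)
  simp only [h.energy_eq] at hchain
  exact hchain.unique (by simpa using hasDerivAt_pow 2 r)

theorem even_deriv (h : NormalCoord g S s) : s.Even := by
  intro r
  have hneg : HasDerivAt (fun r ↦ S (-r)) (s (-r) * -1) r :=
    (h.hasDerivAt (-r)).comp r (hasDerivAt_neg r)
  simp only [h.odd _] at hneg
  linarith [hneg.unique (h.hasDerivAt r).neg]

theorem deriv_zero_sq (h : NormalCoord g S s) (hg : Continuous g) (hk : HasDerivAt g k 0) :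
    k * s 0 ^ 2 = 2 := by
  have hgS : HasDerivAt (fun r ↦ g (S r)) (k * s 0) 0 :=
    HasDerivAt.comp 0 (by rwa [h.map_zero]) (h.hasDerivAt 0)
  have hg0 : g (S 0) = 0 := by
    have hmul := h.apply_mul_deriv hg 0
    rw [mul_zero] at hmul
    exact (mul_eq_zero.1 hmul).resolve_right (h.deriv_pos 0).ne'
  have hlim := (hasDerivAt_iff_tendsto_slope.1 hgS).mul
    ((h.continuous_deriv.tendsto 0).mono_left nhdsWithin_le_nhds)
  have hconst : Tendsto (fun r ↦ slope (fun r ↦ g (S r)) 0 r * s r) (𝓝[≠] 0) (𝓝 2) := by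
    refine tendsto_const_nhds.congr' ?_
    filter_upwards [self_mem_nhdsWithin] with r hr
    rw [slope_def_field, hg0, sub_zero, sub_zero, div_mul_eq_mul_div, h.apply_mul_deriv hg,
      mul_div_cancel_right₀ _ hr]
  rw [sq, ← mul_assoc]
  exact tendsto_nhds_unique hlim hconst

theorem integral_deriv (h : NormalCoord g S s) (u v : ℝ) : ∫ r in u..v, s r = S v - S u :=
  integral_eq_sub_of_hasDerivAt (fun r _ ↦ h.hasDerivAt r)
    (h.continuous_deriv.intervalIntegrable _ _)

theorem continuous_deriv_mul_deriv (h : NormalCoord g S s) (ρ : ℝ) :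
    Continuous fun θ ↦ s (ρ * cos θ) * s (ρ * sin θ) := by
  have := h.continuous_deriv
  fun_prop

/-- In the angle of the normal coordinates, `x' = -g y`, `y' = g x` reads
`θ' = 2 / (s (ρ cos θ) * s (ρ sin θ))`. The right-hand side is `π / 2`-periodic because `s` is
even, so when a quarter turn takes time `1`, the delay `t - 1` turns `x = S (ρ cos θ)` into
`y = S (ρ sin θ)`. -/
theorem exists_isKY (h : NormalCoord g S s) (hg : Continuous g) (hρ : 0 < ρ)
    (hQ : quarterTime s ρ = 1) :
    ∃ p, IsKY (fun x ↦ -g x) p ∧ IsGreatest (range fun t ↦ |p t|) (S ρ) := by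
  have hper : Function.Periodic (fun θ ↦ s (ρ * cos θ) * s (ρ * sin θ) / 2) (π / 2) := by
    intro θ
    beta_reduce
    rw [cos_add_pi_div_two, sin_add_pi_div_two, mul_neg, h.even_deriv, mul_comm (s _)]
  obtain ⟨Θ, hderiv, hshift⟩ := exists_orderIso_hasDerivAt_inv_of_periodic
    ((h.continuous_deriv_mul_deriv ρ).div_const 2)
    (fun θ ↦ half_pos (mul_pos (h.deriv_pos _) (h.deriv_pos _))) hper pi_div_two_pos
  rw [← quarterTime, hQ] at hshift
  have hdelay (t : ℝ) : cos (Θ (t - 1)) = sin (Θ t) := by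
    have hΘ := hshift (t - 1)
    rw [sub_add_cancel] at hΘ
    rw [hΘ, sin_add_pi_div_two]
  refine ⟨fun t ↦ S (ρ * cos (Θ t)), isKY_comp_cos (φ := fun u ↦ S (ρ * u)) ?_ ?_ ?_ ?_,
    ⟨Θ.symm 0, ?_⟩, ?_⟩
  · exact S.injective.comp (mul_right_injective₀ hρ.ne')
  · intro u
    beta_reduce
    rw [mul_neg, h.odd]
  · intro t
    rw [show t + 2 = t + 1 + 1 by ring, hshift, hshift]
    ring
  · intro t
    rw [hdelay]
    refine ((h.hasDerivAt (ρ * cos (Θ t))).comp t ((hderiv t).cos.const_mul ρ)).congr_deriv ?_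
    have hcos := h.deriv_pos (ρ * cos (Θ t))
    have hsin := h.deriv_pos (ρ * sin (Θ t))
    field_simp
    linear_combination h.apply_mul_deriv hg (ρ * sin (Θ t))
  · simp [abs_of_nonneg (h.map_zero ▸ S.monotone hρ.le)]
  · rintro _ ⟨t, rfl⟩
    have hle : |ρ * cos (Θ t)| ≤ ρ := by
      rw [abs_mul, abs_of_pos hρ]
      exact mul_le_of_le_one_right hρ.le (abs_cos_le_one _)
    rw [abs_le] at hle ⊢
    exact ⟨h.odd ρ ▸ S.monotone hle.1, S.monotone hle.2⟩

theorem quarterTime_zero (h : NormalCoord g S s) (hg : Continuous g) (hk : HasDerivAt g k 0) :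
    quarterTime s 0 = π / (2 * k) := by
  have hs := h.deriv_zero_sq hg hk
  have hk0 : k ≠ 0 := left_ne_zero_of_mul (hs.trans_ne two_ne_zero)
  simp only [quarterTime, zero_mul, integral_const, smul_eq_mul, sub_zero]
  field_simp
  linear_combination hs

/-- The two halves of the quarter turn take the same time, by the symmetry `θ ↦ π / 2 - θ`. -/
theorem quarterTime_eq_integral_pi_div_four (h : NormalCoord g S s) (ρ : ℝ) :
    quarterTime s ρ = ∫ θ in (0 : ℝ)..π / 4, s (ρ * cos θ) * s (ρ * sin θ) := by
  have hint (a b : ℝ) := (h.continuous_deriv_mul_deriv ρ).intervalIntegrable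
    (μ := MeasureTheory.volume) a b
  have hsymm : ∫ θ in (0 : ℝ)..π / 4, s (ρ * cos θ) * s (ρ * sin θ) =
      ∫ θ in π / 4..π / 2, s (ρ * cos θ) * s (ρ * sin θ) := by
    have hrefl := integral_comp_sub_left (a := π / 4) (b := π / 2)
      (fun θ ↦ s (ρ * cos θ) * s (ρ * sin θ)) (π / 2)
    rw [sub_self, show π / 2 - π / 4 = π / 4 by ring] at hrefl
    rw [← hrefl]
    simp only [cos_pi_div_two_sub, sin_pi_div_two_sub, mul_comm]
  rw [quarterTime, integral_div, ← integral_add_adjacent_intervals (hint 0 (π / 4)) (hint _ _),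
    ← hsymm]
  ring

/-- While the first coordinate `ρ cos θ` decreases from `ρ` to `ρ cos α`, the second variable
moves at the constant speed `δ` from `0` to `S (ρ sin α)`. -/
theorem integral_deriv_mul_deriv_of_eq_const (h : NormalCoord g S s) (hg : Continuous g)
    {α δ : ℝ} (hδ : δ ≠ 0) (hρ : 0 ≤ ρ) (hα : 0 ≤ α) (hαπ : α ≤ π)
    (hconst : ∀ r ∈ Icc (ρ * cos α) ρ, g (S r) = δ) :
    ∫ θ in (0 : ℝ)..α, s (ρ * cos θ) * s (ρ * sin θ) = 2 * S (ρ * sin α) / δ := by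
  have hderiv : ∀ θ ∈ uIcc 0 α, HasDerivAt (fun θ ↦ 2 * S (ρ * sin θ) / δ)
      (s (ρ * cos θ) * s (ρ * sin θ)) θ := by
    intro θ hθ
    rw [uIcc_of_le hα] at hθ
    have hspeed := h.apply_mul_deriv hg (ρ * cos θ)
    rw [hconst _ ⟨mul_le_mul_of_nonneg_left
      (cos_le_cos_of_nonneg_of_le_pi hθ.1 hαπ hθ.2) hρ,
      mul_le_of_le_one_right hρ (cos_le_one θ)⟩] at hspeed
    refine ((((h.hasDerivAt (ρ * sin θ)).comp θ
      ((hasDerivAt_sin θ).const_mul ρ)).const_mul 2).div_const δ).congr_deriv ?_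
    field_simp
    linear_combination -s (ρ * sin θ) * hspeed
  rw [integral_eq_sub_of_hasDerivAt hderiv
    ((h.continuous_deriv_mul_deriv ρ).intervalIntegrable _ _)]
  simp [h.map_zero]

theorem le_quarterTime (h : NormalCoord g S s) (hg : Continuous g) {α δ : ℝ} (hδ : δ ≠ 0)
    (hρ : 0 ≤ ρ) (hα : 0 ≤ α) (hα4 : α ≤ π / 4)
    (hconst : ∀ r ∈ Icc (ρ * cos α) ρ, g (S r) = δ) :
    2 * S (ρ * sin α) / δ ≤ quarterTime s ρ := by
  rw [h.quarterTime_eq_integral_pi_div_four, ← h.integral_deriv_mul_deriv_of_eq_const hg hδ hρ hα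
    (by linarith [pi_pos]) hconst]
  exact integral_mono_interval le_rfl hα hα4
    (.of_forall fun θ ↦ (mul_pos (h.deriv_pos _) (h.deriv_pos _)).le)
    ((h.continuous_deriv_mul_deriv ρ).intervalIntegrable _ _)

/-- The period is the derivative of the enclosed area with respect to the energy. -/
theorem setIntegral_quarterAnnulus (h : NormalCoord g S s) {ρ₁ ρ₂ : ℝ} (hρ₁ : 0 < ρ₁)
    (hρ : ρ₁ ≤ ρ₂) :
    ∫ p in polarCoord.symm '' (Icc ρ₁ ρ₂ ×ˢ Icc 0 (π / 2)), s p.1 * s p.2 =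
      ∫ r in ρ₁..ρ₂, 2 * r * quarterTime s r := by
  have hs := h.continuous_deriv
  rw [setIntegral_polarCoord_symm_image (by fun_prop) hρ₁ hρ (by linarith [pi_pos])
    pi_div_two_pos.le (by linarith [pi_pos])]
  refine integral_congr fun r _ ↦ ?_
  simp only [quarterTime, integral_div]
  ring

theorem setIntegral_square_sdiff_corner (h : NormalCoord g S s) {c ρ : ℝ} (hc : 0 ≤ c)
    (hcρ : c ≤ ρ) :
    ∫ p in (Icc 0 ρ ×ˢ Icc 0 ρ) \ (Ioc c ρ ×ˢ Ioc c ρ), s p.1 * s p.2 =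
      S ρ ^ 2 - (S ρ - S c) ^ 2 := by
  have hs := h.continuous_deriv
  have hint : MeasureTheory.IntegrableOn (fun p : ℝ × ℝ ↦ s p.1 * s p.2)
      (Icc 0 ρ ×ˢ Icc 0 ρ) :=
    ContinuousOn.integrableOn_compact (isCompact_Icc.prod isCompact_Icc) (by fun_prop)
  have hsub : Ioc c ρ ⊆ Icc 0 ρ := Ioc_subset_Icc_self.trans (Icc_subset_Icc_left hc)
  rw [MeasureTheory.setIntegral_sdiff (measurableSet_Ioc.prod measurableSet_Ioc) hint
    (prod_mono hsub hsub), MeasureTheory.Measure.volume_eq_prod,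
    MeasureTheory.setIntegral_prod_mul, MeasureTheory.setIntegral_prod_mul,
    MeasureTheory.integral_Icc_eq_integral_Ioc, ← integral_of_le (hc.trans hcρ),
    ← integral_of_le hcρ, h.integral_deriv, h.integral_deriv, h.map_zero]
  ring

/-- In the variables `x = S u`, `y = S v` the quarter annulus between the two levels lies in the
square `[0, S ρ₂]²` without its corner `(S (ρ₂ / √2), S ρ₂]²`. -/
theorem sq_sub_sq_le_of_one_le_quarterTime (h : NormalCoord g S s) {ρ₁ ρ₂ : ℝ} (hρ₁ : 0 < ρ₁)
    (hρ : ρ₁ ≤ ρ₂) (hQ : ∀ r ∈ Icc ρ₁ ρ₂, 1 ≤ quarterTime s r) :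
    ρ₂ ^ 2 - ρ₁ ^ 2 ≤ S ρ₂ ^ 2 - (S ρ₂ - S (ρ₂ / √2)) ^ 2 := by
  have hρ₂ : 0 ≤ ρ₂ := hρ₁.le.trans hρ
  have hs := h.continuous_deriv
  have hQc := continuous_quarterTime h.continuous_deriv
  calc ρ₂ ^ 2 - ρ₁ ^ 2 = ∫ r in ρ₁..ρ₂, 2 * r := by
        rw [integral_const_mul, integral_id]
        ring
    _ ≤ ∫ r in ρ₁..ρ₂, 2 * r * quarterTime s r :=
        integral_mono_on hρ (Continuous.intervalIntegrable (by fun_prop) _ _)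
          (Continuous.intervalIntegrable (by fun_prop) _ _) fun r hr ↦
          le_mul_of_one_le_right (mul_nonneg zero_le_two (hρ₁.le.trans hr.1)) (hQ r hr)
    _ = ∫ p in polarCoord.symm '' (Icc ρ₁ ρ₂ ×ˢ Icc 0 (π / 2)), s p.1 * s p.2 :=
        (h.setIntegral_quarterAnnulus hρ₁ hρ).symm
    _ ≤ ∫ p in (Icc 0 ρ₂ ×ˢ Icc 0 ρ₂) \ (Ioc (ρ₂ / √2) ρ₂ ×ˢ Ioc (ρ₂ / √2) ρ₂),
          s p.1 * s p.2 := by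
        refine MeasureTheory.setIntegral_mono_set (MeasureTheory.IntegrableOn.mono_set
          (ContinuousOn.integrableOn_compact (isCompact_Icc.prod isCompact_Icc) (by fun_prop))
          sdiff_subset) (.of_forall fun p ↦ ?_)
          (polarCoord_symm_image_subset_square_sdiff_corner hρ₁.le).eventuallyLE
        exact (mul_pos (h.deriv_pos _) (h.deriv_pos _)).le
    _ = S ρ₂ ^ 2 - (S ρ₂ - S (ρ₂ / √2)) ^ 2 :=
        h.setIntegral_square_sdiff_corner (div_nonneg hρ₂ (sqrt_nonneg 2))
          (div_le_self hρ₂ (one_le_sqrt.2 one_le_two))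

/-- If `quarterTime` were at least `1` throughout, the area of the quarter annulus would be at
least the gain of energy `γ (a - c) ≥ 4 a (a - c)`. But it is less than
`(2 a - c) ^ 2 - c ^ 2 = 4 a (a - c)`, since the removed corner has side more than `c`. -/
theorem exists_quarterTime_lt_one (h : NormalCoord g S s) (hg : Continuous g) {a c γ : ℝ}
    (ha : 0 < a) (hc : 0 ≤ c) (hca : 3 * c ≤ a) (haγ : 4 * a ≤ γ)
    (hle : ∀ x ∈ Icc 0 (2 * a), g x ≤ γ) (hge : ∀ x ∈ Icc a (2 * a - c), γ ≤ g x) :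
    ∃ ρ ∈ Icc (S.symm a) (S.symm (2 * a - c)), quarterTime s ρ < 1 := by
  by_contra! hQ
  have hρ₁ : 0 < S.symm a := h.symm_zero ▸ S.symm.strictMono ha
  have hρ : S.symm a ≤ S.symm (2 * a - c) := S.symm.monotone (by linarith)
  have harea := h.sq_sub_sq_le_of_one_le_quarterTime hρ₁ hρ hQ
  have hgain := le_energy_sub hg (by linarith) hge
  rw [h.energy_eq_symm_sq, h.energy_eq_symm_sq] at hgain
  set ρ := S.symm (2 * a - c)
  have hSρ : S ρ = 2 * a - c := S.apply_symm_apply _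
  have hρ0 : 0 ≤ ρ := hρ₁.le.trans hρ
  have hcorner : c < S ρ - S (ρ / √2) := by
    have hS0 : 0 ≤ S (ρ / √2) := h.map_zero ▸ S.monotone (div_nonneg hρ0 (sqrt_nonneg 2))
    have henergy := energy_sub_le hg (S.monotone (div_le_self hρ0 (one_le_sqrt.2 one_le_two)))
      fun x hx ↦ hle x ⟨hS0.trans hx.1, by linarith [hx.2]⟩
    rw [h.energy_eq, h.energy_eq, div_pow, sq_sqrt zero_le_two] at henergy
    have hside : γ * ((a - c) / 2) < γ * (S ρ - S (ρ / √2)) := by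
      linarith [pow_pos hρ₁ 2]
    linarith [lt_of_mul_lt_mul_left hside (by linarith)]
  have hγ : 4 * a * (a - c) ≤ γ * (a - c) := mul_le_mul_of_nonneg_right haγ (by linarith)
  have hcorner_sq : c ^ 2 < (S ρ - S (ρ / √2)) ^ 2 := pow_lt_pow_left₀ hcorner hc two_ne_zero
  rw [hSρ] at harea hcorner_sq
  linarith

/-- The height `y = S (ρ sin α)` reached while the other variable moves from `M` down to `m` has
energy `δ (M - m) ≥ δ γ / 2`, and `g ≤ γ` below it, whence `2 y ≥ δ`. -/
theorem one_le_quarterTime (h : NormalCoord g S s) (hg : Continuous g) {m M γ δ : ℝ}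
    (hm : 0 < m) (hmM : m ≤ M) (hγ : 0 < γ) (hδ : 0 < δ) (hγM : γ ≤ 2 * (M - m))
    (henergy : δ * (M - m) ≤ energy g m) (hle : ∀ x ∈ Icc 0 m, g x ≤ γ)
    (htail : ∀ x ∈ Icc m M, g x = δ) :
    1 ≤ quarterTime s (S.symm M) := by
  have hb : 0 < S.symm m := h.symm_zero ▸ S.symm.strictMono hm
  have hρ : 0 < S.symm M := hb.trans_le (S.symm.monotone hmM)
  have hgap : S.symm M ^ 2 - S.symm m ^ 2 = δ * (M - m) := by
    rw [← h.energy_eq_symm_sq, ← h.energy_eq_symm_sq]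
    exact le_antisymm (energy_sub_le hg hmM fun t ht ↦ (htail t ht).le)
      (le_energy_sub hg hmM fun t ht ↦ (htail t ht).ge)
  rw [h.energy_eq_symm_sq] at henergy
  obtain ⟨α, hα, hα4, hcos, hsin⟩ := exists_angle_le_pi_div_four hb.le hρ
    (S.symm.monotone hmM) (by linarith : S.symm M ^ 2 ≤ 2 * S.symm m ^ 2)
  set ρ := S.symm M
  have hy : 0 ≤ ρ * sin α :=
    mul_nonneg hρ.le (sin_nonneg_of_nonneg_of_le_pi hα (by linarith [pi_pos]))
  have hym : S (ρ * sin α) ≤ m := by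
    rw [← S.le_symm_apply]
    exact le_of_sq_le_sq (by linarith) hb.le
  have hheight := energy_sub_le hg (h.map_zero ▸ S.monotone hy)
    fun x hx ↦ hle x ⟨hx.1, hx.2.trans hym⟩
  rw [energy_zero, h.energy_eq, sub_zero, sub_zero, hsin, hgap] at hheight
  have hSy : γ * δ ≤ γ * (2 * S (ρ * sin α)) := by
    linarith [mul_le_mul_of_nonneg_left hγM hδ.le]
  refine le_trans ?_ (h.le_quarterTime hg hδ.ne' hρ.le hα hα4 fun r hr ↦ htail _ ?_)
  · rw [one_le_div hδ]
    exact le_of_mul_le_mul_left hSy hγ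
  · rw [hcos] at hr
    exact ⟨S.symm_apply_le.1 hr.1, S.le_symm_apply.1 hr.2⟩

theorem exists_isKY_pair (h : NormalCoord g S s) (hg : Continuous g) {ρ₁ ρ₂ : ℝ}
    (hρ₁ : 0 < ρ₁) (hρ : ρ₁ ≤ ρ₂) (hQ0 : 1 < quarterTime s 0) (hQ₁ : quarterTime s ρ₁ < 1)
    (hQ₂ : 1 ≤ quarterTime s ρ₂) :
    ∃ p q, IsKY (fun x ↦ -g x) p ∧ IsKY (fun x ↦ -g x) q ∧
      (∀ σ, ∃ t, q t ≠ p (t + σ)) ∧ ∀ t, |p t| ≤ S ρ₂ ∧ |q t| ≤ S ρ₂ := by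
  have hQ := continuous_quarterTime h.continuous_deriv
  obtain ⟨r₁, ⟨hr₁, hrρ₁⟩, hQr₁⟩ := intermediate_value_Ioo' hρ₁.le hQ.continuousOn ⟨hQ₁, hQ0⟩
  obtain ⟨r₂, ⟨hρr₂, hr₂⟩, hQr₂⟩ := intermediate_value_Ioc hρ hQ.continuousOn ⟨hQ₁, hQ₂⟩
  obtain ⟨p, hp, -, hpmax⟩ := h.exists_isKY hg hr₁ hQr₁
  obtain ⟨q, hq, ⟨t, ht⟩, hqmax⟩ := h.exists_isKY hg (hρ₁.trans hρr₂) hQr₂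
  refine ⟨p, q, hp, hq, fun σ ↦ ⟨t, fun heq ↦ ?_⟩, fun t ↦ ⟨?_, ?_⟩⟩
  · have hlt : S r₁ < S r₂ := S.strictMono (hrρ₁.trans hρr₂)
    exact hlt.not_ge (ht.symm.trans_le ((congrArg abs heq).trans_le (hpmax ⟨t + σ, rfl⟩)))
  · exact (hpmax ⟨t, rfl⟩).trans (S.monotone (hrρ₁.trans_le hρ).le)
  · exact (hqmax ⟨t, rfl⟩).trans (S.monotone hr₂)

end NormalCoord

theorem IsRestoring.exists_isKY_pair {g : ℝ → ℝ} {a c δ γ k : ℝ} (hg : IsRestoring g)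
    (hk : HasDerivAt g k 0) (hk0 : 0 < k) (hkπ : k < Real.pi / 2) (ha : 0 < a) (hc : 0 ≤ c)
    (hδ : 0 < δ) (hca : 3 * c ≤ a) (hδc : δ + c ≤ a) (haγ : 4 * a ≤ γ)
    (hle : ∀ x ∈ Icc 0 (2 * a), g x ≤ γ) (hge : ∀ x ∈ Icc a (2 * a - c), γ ≤ g x)
    (htail : ∀ x, 2 * a ≤ x → g x = δ) :
    ∃ p q, IsKY (fun x ↦ -g x) p ∧ IsKY (fun x ↦ -g x) q ∧
      (∀ σ, ∃ t, q t ≠ p (t + σ)) ∧ ∀ t, |p t| ≤ γ ∧ |q t| ≤ γ := by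
  obtain ⟨S, s, hS⟩ := hg.exists_normalCoord hk hk0
    (tendsto_energy_atTop hg.continuous hδ fun x hx ↦ (htail x hx).ge)
  have hQ0 : 1 < quarterTime s 0 := by
    rw [hS.quarterTime_zero hg.continuous hk, one_lt_div (by linarith)]
    linarith
  obtain ⟨ρ, hρ, hQρ⟩ := hS.exists_quarterTime_lt_one hg.continuous ha hc hca haγ hle hge
  have henergy : δ * (γ - 2 * a) ≤ energy g (2 * a) :=
    calc δ * (γ - 2 * a) ≤ δ * γ := mul_le_mul_of_nonneg_left (by linarith) hδ.le
      _ ≤ γ * (2 * a - c - a) := by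
        rw [mul_comm]
        exact mul_le_mul_of_nonneg_left (by linarith) (by linarith)
      _ ≤ energy g (2 * a - c) - energy g a := le_energy_sub hg.continuous (by linarith) hge
      _ ≤ energy g (2 * a) := by
        have hmono := le_energy_sub (C := 0) hg.continuous (by linarith : 2 * a - c ≤ 2 * a)
          fun t ht ↦ (hg.pos t (by linarith [ht.1])).le
        rw [zero_mul] at hmono
        linarith [hg.energy_pos ha.ne']
  have hQγ : 1 ≤ quarterTime s (S.symm γ) :=
    hS.one_le_quarterTime hg.continuous (by linarith) (by linarith) (by linarith) hδ
      (by linarith) henergy hle fun x hx ↦ htail x hx.1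
  simpa only [S.apply_symm_apply] using hS.exists_isKY_pair hg.continuous
    ((hS.symm_zero ▸ S.symm.strictMono ha).trans_le hρ.1)
    (hρ.2.trans (S.symm.monotone (by linarith))) hQ0 hQρ hQγ

theorem isRestoring_neg {f : ℝ → ℝ} (hf : Continuous f) (hfb : ∀ x ≠ 0, x * f x < 0)
    (hodd : f.Odd) : IsRestoring fun x ↦ -f x where
  continuous := hf.neg
  odd x := by
    beta_reduce
    rw [hodd]
  pos x hx := neg_pos.2 ((pos_iff_neg_of_mul_neg (hfb x hx.ne')).1 hx)

theorem statement_13_general {f : ℝ → ℝ} {a c δ γ d : ℝ} (ha : 0 < a) (hc : 0 ≤ c) (hδ : 0 < δ)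
    (hca : 3 * c ≤ a) (hδc : δ + c ≤ a) (haγ : 4 * a ≤ γ) (hf : Continuous f)
    (hfb : ∀ x ≠ 0, x * f x < 0) (hf'' : HypH'' f a c δ γ) (hd : HasDerivAt f d 0) (hd0 : d < 0)
    (hdπ : -(Real.pi / 2) < d) :
    ∃ p q, IsKY f p ∧ IsKY f q ∧ ∀ σ, ∃ t, q t ≠ p (t + σ) := by
  obtain ⟨hodd, hbound, hplateau, htail⟩ := hf''
  have hγ : 0 < γ := by linarith
  have hsat {x : ℝ} (hx : |x| ≤ γ) : saturate (fun x ↦ -f x) γ x = -f x := saturate_of_abs_le _ hx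
  have hsat_eq {x : ℝ} (hx : 0 ≤ x) (hx' : x ≤ 2 * a) : saturate (fun x ↦ -f x) γ x = -f x :=
    hsat (abs_le.2 ⟨by linarith, by linarith⟩)
  obtain ⟨p, q, hp, hq, hpq, hle⟩ := ((isRestoring_neg hf hfb hodd).saturate hγ).exists_isKY_pair
    (hasDerivAt_saturate_zero hγ hd.neg) (neg_pos.2 hd0) (by linarith) ha hc hδ hca hδc haγ
    (fun x hx ↦ hsat_eq hx.1 hx.2 ▸ (neg_le_abs _).trans (hbound x hx))
    (fun x hx ↦ by
      rw [hsat_eq (by linarith [hx.1]) (by linarith [hx.2]), hplateau x hx, neg_neg])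
    (fun x hx ↦ by
      have hmem : min x γ ∈ Icc (2 * a) γ := ⟨le_min hx (by linarith), min_le_right _ _⟩
      rw [saturate, max_eq_right (by linarith [hmem.1]), htail _ hmem, neg_neg])
  exact ⟨p, q, hp.congr fun t ↦ neg_eq_iff_eq_neg.2 (hsat (hle t).1),
    hq.congr fun t ↦ neg_eq_iff_eq_neg.2 (hsat (hle t).2), hpq⟩

theorem statement_13 (f : ℝ → ℝ) (a c δ γ : ℝ)
    (ha : 0 < a) (hc : 0 < c) (hδ : 0 < δ) (hγ : 0 < γ)
    (hi : c < min a δ) (hii : 4 * a ≤ γ ∧ δ < γ) (hiii : δ + (c / δ) * γ ≤ a)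
    (hH : HypH f) (hH'' : HypH'' f a c δ γ)
    (hderiv : -(Real.pi / 2) < deriv f 0) :
    ∃ p q : ℝ → ℝ, IsSOP f p ∧ IsSOP f q ∧
      (∀ s : ℝ, ∃ t : ℝ, q t ≠ p (t + s)) ∧
      PeriodThreeZeros p ∧ PeriodThreeZeros q := by
  have hca : δ + 4 * c ≤ a :=
    calc δ + 4 * c = δ + c / δ * (4 * δ) := by field_simp
      _ ≤ δ + c / δ * γ := by
        have : 0 ≤ c / δ * γ := by positivity
        gcongr
        linarith
      _ ≤ a := hiii
  obtain ⟨p, q, hp, hq, hpq⟩ := statement_13_general ha hc.le hδ (by linarith) (by linarith)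
    hii.1 hH.1 hH.2.1 hH'' hH.2.2.1.self_of_nhds.hasDerivAt hH.2.2.2 hderiv
  exact ⟨p, q, hp.1, hq.1, hpq, hp.periodThreeZeros, hq.periodThreeZeros⟩
end

section
/- Let f : ℝ → ℝ be continuously differentiable, odd, satisfy the negative feedback condition x·f(x) < 0 for all x ≠ 0 with f'(0) < 0, and be constant on [ρ, ∞) for some ρ > 0. Then there exists a continuous function τ : (0,∞) → (0,∞) such that for every u₀ > 0, the unique solution (u, v) : [0,∞) → ℝ² of the planar system u' = f(v), v' = -f(u) with u(0) = u₀, v(0) = 0 satisfies u(t) > 0 for all t ∈ [0, τ(u₀)) and u(τ(u₀)) = 0; moreover τ(u) → -π/(2 f'(0)) as u → 0⁺ and τ(u) → ∞ as u → ∞. -/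
/-!
Write `f x = -(x * s x)` with a continuous positive `s`, where `s 0 = -f'(0)`, and let `F x` be the
integral of `y * s y` from `0` to `x`, so that `F u + F v` is conserved. The signed amplitude
`G x = ± √(2 F x)`, with the sign of `x`, is continuously differentiable with positive derivative
`g = s / √(2 F x / x²)`, also at `0`, and `x * s x = g x * G x`. In the coordinates `G u`, `G v`
the system is therefore a harmonic oscillator with positive angular velocity `g u * g v`: the orbit
of `(u₀, 0)` has `G u = G u₀ * cos θ`, `G v = G u₀ * sin θ`, and `u` first vanishes when `θ`
reaches `π / 2`, at time `τ u₀ = ∫ θ in 0..π/2, 1 / (g u * g v)`.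

The integrand is jointly continuous in `(u₀, θ)`, also at `u₀ = 0`, where it is the constant
`1 / s 0`; this gives the continuity of `τ` and its limit at `0`. For the limit at infinity,
`-du/dθ = v * s v / (g u * g v)`, so `u₀ ≤ τ u₀ * max (v * s v)`, the maximum over `0 ≤ v ≤ u₀`,
which is `o(u₀)`.
-/

open Set Filter

open scoped Topology Real Asymptotics

lemma exists_angle_of_hasDerivAt_rotation {x y ω : ℝ → ℝ} (hω : ContinuousOn ω (Ici 0))
    (hx : ∀ t, 0 ≤ t → HasDerivAt x (-(ω t * y t)) t)
    (hy : ∀ t, 0 ≤ t → HasDerivAt y (ω t * x t) t) (hy0 : y 0 = 0) :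
    ∃ θ : ℝ → ℝ, θ 0 = 0 ∧ (∀ t, 0 ≤ t → HasDerivAt θ (ω t) t) ∧
      ∀ t, 0 ≤ t → x t = x 0 * Real.cos (θ t) ∧ y t = x 0 * Real.sin (θ t) := by
  have hωmax : Continuous fun t => ω (max t 0) :=
    hω.comp_continuous (by fun_prop) fun t => le_max_right t 0
  let θ : ℝ → ℝ := fun t => ∫ r in (0 : ℝ)..t, ω (max r 0)
  have hθ : ∀ t, 0 ≤ t → HasDerivAt θ (ω t) t := fun t ht => by
    simpa only [max_eq_left ht] using hωmax.integral_hasStrictDerivAt 0 t |>.hasDerivAt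
  have hθ0 : θ 0 = 0 := intervalIntegral.integral_same
  -- `(x, y)` and `x 0 • (cos θ, sin θ)` solve the same linear system, which preserves distances.
  let d : ℝ → ℝ := fun t =>
    (x t - x 0 * Real.cos (θ t)) ^ 2 + (y t - x 0 * Real.sin (θ t)) ^ 2
  have hd : ∀ t, 0 ≤ t → HasDerivAt d 0 t := fun t ht => by
    have hcos := (hx t ht).sub ((hθ t ht).cos.const_mul (x 0))
    have hsin := (hy t ht).sub ((hθ t ht).sin.const_mul (x 0))
    refine ((hcos.pow 2).add (hsin.pow 2)).congr_deriv ?_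
    simp only [Pi.sub_apply]
    ring
  have hd0 : ∀ t, 0 ≤ t → d t = 0 := fun t ht => by
    have hconst := constant_of_has_deriv_right_zero
      (fun r hr => (hd r hr.1).continuousAt.continuousWithinAt)
      (fun r hr => (hd r hr.1).hasDerivWithinAt) t (right_mem_Icc.2 ht)
    simpa [d, hθ0, hy0] using hconst
  refine ⟨θ, hθ0, hθ, fun t ht => ?_⟩
  have hzero := (add_eq_zero_iff_of_nonneg (sq_nonneg _) (sq_nonneg _)).1 (hd0 t ht)
  exact ⟨sub_eq_zero.1 (sq_eq_zero_iff.1 hzero.1), sub_eq_zero.1 (sq_eq_zero_iff.1 hzero.2)⟩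

lemma integral_comp_eq_self_of_mul_deriv_eq_one {w θ θ' : ℝ → ℝ} {t : ℝ} (hw : Continuous w)
    (hθ0 : θ 0 = 0) (hθ : ∀ r ∈ Icc 0 t, HasDerivAt θ (θ' r) r)
    (hone : ∀ r ∈ Icc 0 t, w (θ r) * θ' r = 1) (ht : 0 ≤ t) :
    ∫ a in (0 : ℝ)..θ t, w a = t := by
  have hderiv : ∀ r ∈ Icc 0 t, HasDerivAt (fun r => (∫ a in (0 : ℝ)..θ r, w a) - r) 0 r :=
    fun r hr => by
      have hint := (hw.integral_hasStrictDerivAt 0 (θ r)).hasDerivAt.comp r (hθ r hr)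
      exact (hint.sub (hasDerivAt_id r)).congr_deriv (by rw [hone r hr, sub_self])
  have hconst := constant_of_has_deriv_right_zero
    (fun r hr => (hderiv r hr).continuousAt.continuousWithinAt)
    (fun r hr => (hderiv r (Ico_subset_Icc_self hr)).hasDerivWithinAt) t (right_mem_Icc.2 ht)
  simpa [hθ0, sub_eq_zero] using hconst

lemma first_passage_eq_integral {w θ θ' : ℝ → ℝ} {c : ℝ} (hw : Continuous w)
    (hwpos : ∀ a, 0 < w a) (hc : 0 ≤ c) (hθ0 : θ 0 = 0)
    (hθ : ∀ t, 0 ≤ t → HasDerivAt θ (θ' t) t) (hθpos : ∀ t, 0 ≤ t → 0 < θ' t)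
    (hone : ∀ t, 0 ≤ t → θ t ∈ Icc 0 c → w (θ t) * θ' t = 1) :
    (∀ t ∈ Ico 0 (∫ a in (0 : ℝ)..c, w a), θ t ∈ Ico 0 c) ∧ θ (∫ a in (0 : ℝ)..c, w a) = c := by
  set T := ∫ a in (0 : ℝ)..c, w a
  have hT0 : 0 ≤ T := intervalIntegral.integral_nonneg hc fun a _ => (hwpos a).le
  have hcont : ContinuousOn θ (Ici 0) := fun t ht => (hθ t ht).continuousAt.continuousWithinAt
  have hmono : StrictMonoOn θ (Ici 0) :=
    strictMonoOn_of_hasDerivWithinAt_pos (convex_Ici 0) hcont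
      (fun t ht => (hθ t (interior_subset ht)).hasDerivWithinAt)
      fun t ht => hθpos t (interior_subset ht)
  have hnonneg : ∀ t, 0 ≤ t → 0 ≤ θ t := fun t ht =>
    hθ0 ▸ hmono.monotoneOn self_mem_Ici ht ht
  have htime : ∀ t, 0 ≤ t → θ t ≤ c → ∫ a in (0 : ℝ)..θ t, w a = t := fun t ht htc =>
    integral_comp_eq_self_of_mul_deriv_eq_one hw hθ0 (fun r hr => hθ r hr.1)
      (fun r hr => hone r hr.1
        ⟨hnonneg r hr.1, (hmono.monotoneOn hr.1 ht hr.2).trans htc⟩) ht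
  have hreach : c ≤ θ T := by
    by_contra! hlt
    have hrest : 0 < ∫ a in θ T..c, w a :=
      intervalIntegral.intervalIntegral_pos_of_pos (hw.intervalIntegrable _ _) hwpos hlt
    have hsplit := intervalIntegral.integral_add_adjacent_intervals
      (hw.intervalIntegrable (μ := MeasureTheory.volume) 0 (θ T)) (hw.intervalIntegrable (θ T) c)
    linarith [htime T hT0 hlt.le]
  obtain ⟨t, ht, htc⟩ := intermediate_value_Icc hT0 (hcont.mono Icc_subset_Ici_self)
    ⟨hθ0.trans_le hc, hreach⟩
  have htT : t = T := by rw [← htime t ht.1 htc.le, htc]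
  have hTc : θ T = c := htT ▸ htc
  exact ⟨fun r hr => ⟨hnonneg r hr.1, (hmono hr.1 hT0 hr.2).trans_eq hTc⟩, hTc⟩

section Amplitude

/-- The weighted mean of the stiffness `s` over the segment from `0` to `x`, normalized so that
`x ^ 2 * meanStiffness s x / 2` is the potential energy of the restoring force `-(x * s x)`. -/
noncomputable def meanStiffness (s : ℝ → ℝ) (x : ℝ) : ℝ :=
  ∫ a in (0 : ℝ)..1, 2 * (a * s (x * a))

/-- The amplitude coordinate: half its square is the potential energy of `-(x * s x)`, and its
sign is that of `x`. It linearizes the planar system up to a change of time. -/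
noncomputable def amplitude (s : ℝ → ℝ) (x : ℝ) : ℝ :=
  x * √(meanStiffness s x)

/-- The derivative of `amplitude s`, in a form that is also valid at `0`. -/
noncomputable def amplitudeDeriv (s : ℝ → ℝ) (x : ℝ) : ℝ :=
  s x / √(meanStiffness s x)

variable {s : ℝ → ℝ}

lemma sq_mul_meanStiffness (s : ℝ → ℝ) (x : ℝ) :
    x ^ 2 * meanStiffness s x = 2 * ∫ y in (0 : ℝ)..x, y * s y := by
  have hscale := intervalIntegral.mul_integral_comp_mul_left (a := 0) (b := 1)
    (f := fun y => y * s y) x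
  simp only [mul_zero, mul_one] at hscale
  simp only [← hscale, meanStiffness, intervalIntegral.integral_const_mul, mul_assoc]
  ring

lemma meanStiffness_zero (s : ℝ → ℝ) : meanStiffness s 0 = s 0 := by
  simp [meanStiffness]

lemma continuous_meanStiffness (hs : Continuous s) : Continuous (meanStiffness s) :=
  intervalIntegral.continuous_parametric_intervalIntegral_of_continuous' (by fun_prop) 0 1

lemma meanStiffness_pos (hs : Continuous s) (hpos : ∀ x, 0 < s x) (x : ℝ) :
    0 < meanStiffness s x :=
  intervalIntegral.intervalIntegral_pos_of_pos_on
    (Continuous.intervalIntegrable (by fun_prop) _ _)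
    (fun a ha => mul_pos two_pos (mul_pos ha.1 (hpos _))) one_pos

lemma hasDerivAt_meanStiffness (hs : Continuous s) {x : ℝ} (hx : x ≠ 0) :
    HasDerivAt (meanStiffness s) (2 * (s x - meanStiffness s x) / x) x := by
  have hint : HasDerivAt (fun x => ∫ y in (0 : ℝ)..x, y * s y) (x * s x) x :=
    ((continuous_id.mul hs).integral_hasStrictDerivAt 0 x).hasDerivAt
  have heq : meanStiffness s =ᶠ[𝓝 x] fun x => (2 * ∫ y in (0 : ℝ)..x, y * s y) / x ^ 2 := by
    filter_upwards [isOpen_ne.mem_nhds hx] with y hy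
    rw [← sq_mul_meanStiffness, mul_div_cancel_left₀ _ (pow_ne_zero 2 hy)]
  refine (((hint.const_mul 2).div (hasDerivAt_pow 2 x)
    (pow_ne_zero 2 hx)).congr_of_eventuallyEq heq).congr_deriv ?_
  rw [← sq_mul_meanStiffness]
  field_simp
  ring

lemma continuous_amplitude (hs : Continuous s) : Continuous (amplitude s) :=
  continuous_id.mul (continuous_meanStiffness hs).sqrt

lemma continuous_amplitudeDeriv (hs : Continuous s) (hpos : ∀ x, 0 < s x) :
    Continuous (amplitudeDeriv s) :=
  hs.div (continuous_meanStiffness hs).sqrt fun x =>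
    (Real.sqrt_pos.2 (meanStiffness_pos hs hpos x)).ne'

lemma amplitudeDeriv_pos (hs : Continuous s) (hpos : ∀ x, 0 < s x) (x : ℝ) :
    0 < amplitudeDeriv s x :=
  div_pos (hpos x) (Real.sqrt_pos.2 (meanStiffness_pos hs hpos x))

lemma hasDerivAt_amplitude (hs : Continuous s) (hpos : ∀ x, 0 < s x) (x : ℝ) :
    HasDerivAt (amplitude s) (amplitudeDeriv s x) x := by
  have hne : ∀ y ≠ (0 : ℝ), HasDerivAt (amplitude s) (amplitudeDeriv s y) y := fun y hy => by
    have hM := meanStiffness_pos hs hpos y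
    refine ((hasDerivAt_id y).mul
      ((hasDerivAt_meanStiffness hs hy).sqrt hM.ne')).congr_deriv ?_
    rw [amplitudeDeriv, id]
    field_simp
    rw [Real.sq_sqrt hM.le]
    ring
  rcases eq_or_ne x 0 with rfl | hx
  · exact hasDerivAt_of_hasDerivAt_of_ne hne (continuous_amplitude hs).continuousAt
      (continuous_amplitudeDeriv hs hpos).continuousAt
  · exact hne x hx

lemma amplitudeDeriv_mul_amplitude (hs : Continuous s) (hpos : ∀ x, 0 < s x) (x : ℝ) :
    amplitudeDeriv s x * amplitude s x = x * s x := by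
  have hM := Real.sqrt_pos.2 (meanStiffness_pos hs hpos x)
  rw [amplitudeDeriv, amplitude]
  field_simp

lemma amplitudeDeriv_zero_sq (hpos : 0 < s 0) : amplitudeDeriv s 0 ^ 2 = s 0 := by
  rw [amplitudeDeriv, meanStiffness_zero, div_pow, Real.sq_sqrt hpos.le]
  field_simp

@[simp]
lemma amplitude_zero (s : ℝ → ℝ) : amplitude s 0 = 0 :=
  zero_mul _

lemma amplitude_pos (hs : Continuous s) (hpos : ∀ x, 0 < s x) {x : ℝ} (hx : 0 < x) :
    0 < amplitude s x :=
  mul_pos hx (Real.sqrt_pos.2 (meanStiffness_pos hs hpos x))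

lemma amplitude_strictMono (hs : Continuous s) (hpos : ∀ x, 0 < s x) :
    StrictMono (amplitude s) :=
  strictMono_of_hasDerivAt_pos (hasDerivAt_amplitude hs hpos) (amplitudeDeriv_pos hs hpos)

lemma hasDerivAt_invFun_amplitude (hs : Continuous s) (hpos : ∀ x, 0 < s x) (x : ℝ) :
    HasDerivAt (Function.invFun (amplitude s)) (amplitudeDeriv s x)⁻¹ (amplitude s x) :=
  (hasStrictDerivAt_of_hasDerivAt_of_continuousAt
    (.of_forall (hasDerivAt_amplitude hs hpos))
    (continuous_amplitudeDeriv hs hpos).continuousAt).to_local_left_inverse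
    (amplitudeDeriv_pos hs hpos x).ne'
    (.of_forall (Function.leftInverse_invFun (amplitude_strictMono hs hpos).injective))
    |>.hasDerivAt

end Amplitude

section QuadrantTime

/-- The point between `0` and `b` whose amplitude is `|c|` times that of `b`, for `|c| ≤ 1`. The
absolute value is there because `amplitude s b * c` may leave the range of `amplitude s` for
`c < 0`; orbits only need `c = cos θ` and `c = sin θ` with `0 ≤ θ ≤ π / 2`. -/
noncomputable def scaledPoint (s : ℝ → ℝ) (b c : ℝ) : ℝ :=
  Function.invFun (amplitude s) (amplitude s b * |c|)

/-- The reciprocal of the angular velocity, in amplitude coordinates, of the orbit through `(b, 0)`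
at angle `θ`. -/
noncomputable def slowness (s : ℝ → ℝ) (b θ : ℝ) : ℝ :=
  (amplitudeDeriv s (scaledPoint s b (Real.cos θ)) *
    amplitudeDeriv s (scaledPoint s b (Real.sin θ)))⁻¹

/-- The time in which the orbit of `u' = -(v * s v)`, `v' = u * s u` through `(b, 0)` crosses the
quadrant `u, v ≥ 0`. -/
noncomputable def quadrantTime (s : ℝ → ℝ) (b : ℝ) : ℝ :=
  ∫ θ in (0 : ℝ)..(π / 2), slowness s b θ

variable {s : ℝ → ℝ}

lemma mul_abs_mem_range_amplitude (hs : Continuous s) (b : ℝ) {c : ℝ} (hc : |c| ≤ 1) :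
    amplitude s b * |c| ∈ range (amplitude s) := by
  have hconvex : Convex ℝ (range (amplitude s)) :=
    (isPreconnected_range (continuous_amplitude hs)).ordConnected.convex
  rw [mul_comm]
  exact (hconvex.starConvex ⟨0, amplitude_zero s⟩).smul_mem (mem_range_self b) (abs_nonneg c) hc

lemma amplitude_scaledPoint (hs : Continuous s) (b : ℝ) {c : ℝ} (hc : |c| ≤ 1) :
    amplitude s (scaledPoint s b c) = amplitude s b * |c| :=
  Function.invFun_eq (mul_abs_mem_range_amplitude hs b hc)

lemma scaledPoint_eq_of_amplitude_eq (hs : Continuous s) (hpos : ∀ x, 0 < s x) {b c x : ℝ}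
    (hx : amplitude s x = amplitude s b * |c|) : scaledPoint s b c = x := by
  rw [scaledPoint, ← hx]
  exact Function.leftInverse_invFun (amplitude_strictMono hs hpos).injective x

lemma scaledPoint_mem_Icc (hs : Continuous s) (hpos : ∀ x, 0 < s x) {b c : ℝ} (hb : 0 ≤ b)
    (hc : |c| ≤ 1) : scaledPoint s b c ∈ Icc 0 b := by
  have hmono := amplitude_strictMono hs hpos
  have hA : 0 ≤ amplitude s b := amplitude_zero s ▸ hmono.monotone hb
  constructor
  · rw [← hmono.le_iff_le, amplitude_zero, amplitude_scaledPoint hs b hc]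
    positivity
  · rw [← hmono.le_iff_le, amplitude_scaledPoint hs b hc]
    exact mul_le_of_le_one_right hA hc

lemma continuous_scaledPoint_comp (hs : Continuous s) (hpos : ∀ x, 0 < s x) {X : Type*}
    [TopologicalSpace X] {b c : X → ℝ} (hb : Continuous b) (hc : Continuous c)
    (hc1 : ∀ p, |c p| ≤ 1) : Continuous fun p => scaledPoint s (b p) (c p) := by
  refine continuous_iff_continuousAt.2 fun p => ?_
  have hinv := (hasDerivAt_invFun_amplitude hs hpos (scaledPoint s (b p) (c p))).continuousAt
  rw [amplitude_scaledPoint hs (b p) (hc1 p)] at hinv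
  exact hinv.comp (f := fun p => amplitude s (b p) * |c p|)
    (((continuous_amplitude hs).comp hb).mul hc.abs).continuousAt

lemma continuous_slowness (hs : Continuous s) (hpos : ∀ x, 0 < s x) :
    Continuous fun p : ℝ × ℝ => slowness s p.1 p.2 := by
  have hg := continuous_amplitudeDeriv hs hpos
  have hcos := continuous_scaledPoint_comp hs hpos continuous_fst
    (Real.continuous_cos.comp continuous_snd) fun p : ℝ × ℝ => Real.abs_cos_le_one p.2
  have hsin := continuous_scaledPoint_comp hs hpos continuous_fst
    (Real.continuous_sin.comp continuous_snd) fun p : ℝ × ℝ => Real.abs_sin_le_one p.2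
  exact ((hg.comp hcos).mul (hg.comp hsin)).inv₀ fun p =>
    (mul_pos (amplitudeDeriv_pos hs hpos _) (amplitudeDeriv_pos hs hpos _)).ne'

lemma continuous_slowness_right (hs : Continuous s) (hpos : ∀ x, 0 < s x) (b : ℝ) :
    Continuous (slowness s b) :=
  (continuous_slowness hs hpos).comp (Continuous.prodMk_right b)

lemma slowness_pos (hs : Continuous s) (hpos : ∀ x, 0 < s x) (b θ : ℝ) : 0 < slowness s b θ :=
  inv_pos.2 (mul_pos (amplitudeDeriv_pos hs hpos _) (amplitudeDeriv_pos hs hpos _))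

lemma continuous_quadrantTime (hs : Continuous s) (hpos : ∀ x, 0 < s x) :
    Continuous (quadrantTime s) :=
  intervalIntegral.continuous_parametric_intervalIntegral_of_continuous'
    (continuous_slowness hs hpos) 0 (π / 2)

lemma quadrantTime_pos (hs : Continuous s) (hpos : ∀ x, 0 < s x) (b : ℝ) :
    0 < quadrantTime s b :=
  intervalIntegral.intervalIntegral_pos_of_pos
    ((continuous_slowness_right hs hpos b).intervalIntegrable _ _) (slowness_pos hs hpos b)
    (by positivity)

lemma quadrantTime_zero (hs : Continuous s) (hpos : ∀ x, 0 < s x) :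
    quadrantTime s 0 = π / (2 * s 0) := by
  have hpoint : ∀ c, scaledPoint s 0 c = 0 := fun c =>
    scaledPoint_eq_of_amplitude_eq hs hpos (by simp)
  have hslow : ∀ θ, slowness s 0 θ = (s 0)⁻¹ := fun θ => by
    rw [slowness, hpoint, hpoint, ← sq, amplitudeDeriv_zero_sq (hpos 0)]
  simp only [quadrantTime, hslow, intervalIntegral.integral_const, sub_zero, smul_eq_mul]
  field_simp

lemma hasDerivAt_scaledPoint_cos (hs : Continuous s) (hpos : ∀ x, 0 < s x) (b : ℝ) {θ : ℝ}
    (hθ : θ ∈ Ioo 0 (π / 2)) :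
    HasDerivAt (fun θ => scaledPoint s b (Real.cos θ))
      (-(scaledPoint s b (Real.sin θ) * s (scaledPoint s b (Real.sin θ)) * slowness s b θ)) θ := by
  have hcos : ∀ᶠ a in 𝓝 θ, |Real.cos a| = Real.cos a := by
    filter_upwards [isOpen_Ioo.mem_nhds hθ] with a ha
    exact abs_of_pos (Real.cos_pos_of_mem_Ioo ⟨by linarith [ha.1, Real.pi_pos], ha.2⟩)
  have hsin : |Real.sin θ| = Real.sin θ :=
    abs_of_pos (Real.sin_pos_of_pos_of_lt_pi hθ.1 (by linarith [hθ.2, Real.pi_pos]))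
  have hinv := hasDerivAt_invFun_amplitude hs hpos (scaledPoint s b (Real.cos θ))
  rw [amplitude_scaledPoint hs b (Real.abs_cos_le_one θ), hcos.self_of_nhds] at hinv
  refine ((hinv.comp θ ((Real.hasDerivAt_cos θ).const_mul (amplitude s b))).congr_of_eventuallyEq
    (hcos.mono fun a ha => by simp only [scaledPoint, ha, Function.comp_apply])).congr_deriv ?_
  have hg := amplitudeDeriv_pos hs hpos (scaledPoint s b (Real.cos θ))
  have hg' := amplitudeDeriv_pos hs hpos (scaledPoint s b (Real.sin θ))
  rw [← amplitudeDeriv_mul_amplitude hs hpos, amplitude_scaledPoint hs b (Real.abs_sin_le_one θ),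
    hsin, slowness]
  field_simp

lemma le_mul_quadrantTime (hs : Continuous s) (hpos : ∀ x, 0 < s x) {b B : ℝ} (hb : 0 ≤ b)
    (hB : ∀ x ∈ Icc 0 b, x * s x ≤ B) : b ≤ B * quadrantTime s b := by
  have hstart : scaledPoint s b (Real.cos 0) = b :=
    scaledPoint_eq_of_amplitude_eq hs hpos (by simp)
  have hend : scaledPoint s b (Real.cos (π / 2)) = 0 :=
    scaledPoint_eq_of_amplitude_eq hs hpos (by simp)
  have hcont : Continuous fun θ => -scaledPoint s b (Real.cos θ) :=
    (continuous_scaledPoint_comp hs hpos continuous_const Real.continuous_cos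
      Real.abs_cos_le_one).neg
  have hle := intervalIntegral.sub_le_integral_of_hasDeriv_right_of_le (by positivity)
    hcont.continuousOn
    (fun θ hθ => (hasDerivAt_scaledPoint_cos hs hpos b hθ).neg.hasDerivWithinAt)
    ((continuous_slowness_right hs hpos b).const_mul B).integrableOn_Icc fun θ _ => by
      rw [neg_neg]
      exact mul_le_mul_of_nonneg_right
        (hB _ (scaledPoint_mem_Icc hs hpos hb (Real.abs_sin_le_one θ)))
        (slowness_pos hs hpos b θ).le
  rwa [hstart, hend, intervalIntegral.integral_const_mul, neg_zero, zero_sub, neg_neg] at hle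

lemma eventually_forall_mul_le_of_tendsto_zero (hs : Continuous s)
    (hlim : Tendsto s atTop (𝓝 0)) {ε : ℝ} (hε : 0 < ε) :
    ∀ᶠ b in atTop, ∀ x ∈ Icc 0 b, x * s x ≤ ε * b := by
  obtain ⟨a, ha⟩ := eventually_atTop.1 (hlim.eventually_le_const hε)
  obtain ⟨C, hC⟩ := (isCompact_Icc (a := 0) (b := a)).bddAbove_image
    (f := fun x => x * s x) (by fun_prop)
  filter_upwards [eventually_ge_atTop (C / ε)] with b hb x hx
  rcases le_total x a with hxa | hax
  · calc x * s x ≤ C := hC (mem_image_of_mem _ ⟨hx.1, hxa⟩)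
      _ ≤ ε * b := (div_le_iff₀' hε).1 hb
  · calc x * s x ≤ x * ε := mul_le_mul_of_nonneg_left (ha x hax) hx.1
      _ ≤ ε * b := by rw [mul_comm]; exact mul_le_mul_of_nonneg_left hx.2 hε.le

lemma tendsto_quadrantTime_atTop (hs : Continuous s) (hpos : ∀ x, 0 < s x)
    (hlim : Tendsto s atTop (𝓝 0)) : Tendsto (quadrantTime s) atTop atTop := by
  refine tendsto_atTop.2 fun N => ?_
  have hε : 0 < (max N 1)⁻¹ := by positivity
  filter_upwards [eventually_forall_mul_le_of_tendsto_zero hs hlim hε, eventually_gt_atTop 0]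
    with b hB hb
  have hle : b ≤ (max N 1)⁻¹ * b * quadrantTime s b := le_mul_quadrantTime hs hpos hb.le hB
  calc N ≤ max N 1 := le_max_left N 1
    _ ≤ quadrantTime s b := by
      rwa [mul_assoc, le_inv_mul_iff₀ (by positivity), mul_comm, mul_le_mul_iff_right₀ hb] at hle

lemma exists_angle_of_hasDerivAt (hs : Continuous s) (hpos : ∀ x, 0 < s x) {u v : ℝ → ℝ}
    (hv0 : v 0 = 0) (hu : ∀ t, 0 ≤ t → HasDerivAt u (-(v t * s (v t))) t)
    (hv : ∀ t, 0 ≤ t → HasDerivAt v (u t * s (u t)) t) :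
    ∃ θ : ℝ → ℝ, θ 0 = 0 ∧
      (∀ t, 0 ≤ t → HasDerivAt θ (amplitudeDeriv s (u t) * amplitudeDeriv s (v t)) t) ∧
      ∀ t, 0 ≤ t → amplitude s (u t) = amplitude s (u 0) * Real.cos (θ t) ∧
        amplitude s (v t) = amplitude s (u 0) * Real.sin (θ t) := by
  have hg := continuous_amplitudeDeriv hs hpos
  refine exists_angle_of_hasDerivAt_rotation (x := fun t => amplitude s (u t))
    (y := fun t => amplitude s (v t)) (fun t ht => ?_) (fun t ht => ?_) (fun t ht => ?_) ?_
  · exact ((hg.continuousAt.comp (hu t ht).continuousAt).mul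
      (hg.continuousAt.comp (hv t ht).continuousAt)).continuousWithinAt
  · refine ((hasDerivAt_amplitude hs hpos (u t)).comp t (hu t ht)).congr_deriv ?_
    rw [← amplitudeDeriv_mul_amplitude hs hpos]
    ring
  · refine ((hasDerivAt_amplitude hs hpos (v t)).comp t (hv t ht)).congr_deriv ?_
    rw [← amplitudeDeriv_mul_amplitude hs hpos]
    ring
  · rw [hv0, amplitude_zero]

lemma slowness_mul_eq_one (hs : Continuous s) (hpos : ∀ x, 0 < s x) {b θ x y : ℝ}
    (hθ : θ ∈ Icc 0 (π / 2)) (hx : amplitude s x = amplitude s b * Real.cos θ)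
    (hy : amplitude s y = amplitude s b * Real.sin θ) :
    slowness s b θ * (amplitudeDeriv s x * amplitudeDeriv s y) = 1 := by
  have hcos := Real.cos_nonneg_of_mem_Icc ⟨by linarith [Real.pi_pos, hθ.1], hθ.2⟩
  have hsin := Real.sin_nonneg_of_nonneg_of_le_pi hθ.1 (by linarith [Real.pi_pos, hθ.2])
  rw [← abs_of_nonneg hcos] at hx
  rw [← abs_of_nonneg hsin] at hy
  rw [slowness, scaledPoint_eq_of_amplitude_eq hs hpos hx,
    scaledPoint_eq_of_amplitude_eq hs hpos hy]
  exact inv_mul_cancel₀ (mul_pos (amplitudeDeriv_pos hs hpos x) (amplitudeDeriv_pos hs hpos y)).ne'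

theorem first_zero_eq_quadrantTime (hs : Continuous s) (hpos : ∀ x, 0 < s x) {u v : ℝ → ℝ}
    (hu0 : 0 < u 0) (hv0 : v 0 = 0) (hu : ∀ t, 0 ≤ t → HasDerivAt u (-(v t * s (v t))) t)
    (hv : ∀ t, 0 ≤ t → HasDerivAt v (u t * s (u t)) t) :
    (∀ t ∈ Ico 0 (quadrantTime s (u 0)), 0 < u t) ∧ u (quadrantTime s (u 0)) = 0 := by
  have hmono : StrictMono (amplitude s) := amplitude_strictMono hs hpos
  obtain ⟨θ, hθ0, hθ, hpolar⟩ := exists_angle_of_hasDerivAt hs hpos hv0 hu hv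
  obtain ⟨hbefore, hreach⟩ := first_passage_eq_integral
    (continuous_slowness_right hs hpos (u 0)) (slowness_pos hs hpos (u 0)) (by positivity) hθ0 hθ
    (fun t _ => mul_pos (amplitudeDeriv_pos hs hpos (u t)) (amplitudeDeriv_pos hs hpos (v t)))
    fun t ht hθt => slowness_mul_eq_one hs hpos hθt (hpolar t ht).1 (hpolar t ht).2
  refine ⟨fun t ht => hmono.lt_iff_lt.1 ?_, hmono.injective ?_⟩
  · have hcos : 0 < Real.cos (θ t) :=
      Real.cos_pos_of_mem_Ioo ⟨by linarith [Real.pi_pos, (hbefore t ht).1], (hbefore t ht).2⟩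
    rw [(hpolar t ht.1).1, amplitude_zero]
    exact mul_pos (amplitude_pos hs hpos hu0) hcos
  · rw [(hpolar _ (quadrantTime_pos hs hpos (u 0)).le).1, quadrantTime, hreach, Real.cos_pi_div_two,
      mul_zero, amplitude_zero]

end QuadrantTime

lemma eq_zero_of_negative_feedback {f : ℝ → ℝ} (hf : Continuous f)
    (hfb : ∀ x : ℝ, x ≠ 0 → x * f x < 0) : f 0 = 0 := by
  have hright : f 0 ≤ 0 := by
    refine le_of_tendsto (hf.continuousAt.mono_left (nhdsWithin_le_nhds (s := Ioi 0))) ?_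
    filter_upwards [self_mem_nhdsWithin] with x hx
    exact (neg_of_mul_neg_right (hfb x (ne_of_gt hx)) (le_of_lt hx)).le
  have hleft : 0 ≤ f 0 := by
    refine ge_of_tendsto (hf.continuousAt.mono_left (nhdsWithin_le_nhds (s := Iio 0))) ?_
    filter_upwards [self_mem_nhdsWithin] with x hx
    exact (pos_of_mul_neg_right (hfb x (ne_of_lt hx)) (le_of_lt hx)).le
  exact hright.antisymm hleft

lemma exists_stiffness_of_negative_feedback {f : ℝ → ℝ} (hf : Continuous f)
    (hfb : ∀ x : ℝ, x ≠ 0 → x * f x < 0) (hderiv : deriv f 0 < 0) :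
    ∃ s : ℝ → ℝ, Continuous s ∧ (∀ x, 0 < s x) ∧ s 0 = -deriv f 0 ∧ ∀ x, f x = -(x * s x) := by
  have hf0 : f 0 = 0 := eq_zero_of_negative_feedback hf hfb
  have hfac : ∀ x, x * dslope f 0 x = f x := fun x => by
    simpa [hf0] using sub_smul_dslope f 0 x
  have hcont : Continuous (dslope f 0) := by
    rw [← continuousOn_univ, continuousOn_dslope univ_mem, continuousOn_univ]
    exact ⟨hf, differentiableAt_of_deriv_ne_zero hderiv.ne⟩
  refine ⟨fun x => -dslope f 0 x, hcont.neg, fun x => neg_pos.2 ?_,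
    congrArg Neg.neg (dslope_same f 0), fun x => by rw [mul_neg, neg_neg, hfac]⟩
  rcases eq_or_ne x 0 with rfl | hx
  · rwa [dslope_same]
  · have hfx := hfb x hx
    rw [← hfac, ← mul_assoc] at hfx
    exact neg_of_mul_neg_right hfx (mul_self_nonneg x)

theorem statement_15_general {f : ℝ → ℝ} (hf : Continuous f)
    (hfb : ∀ x : ℝ, x ≠ 0 → x * f x < 0) (hderiv : deriv f 0 < 0) (hsub : f =o[atTop] id) :
    ∃ τ : ℝ → ℝ, ContinuousOn τ (Ioi 0) ∧ (∀ u₀ : ℝ, 0 < u₀ → 0 < τ u₀) ∧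
      (∀ u₀ : ℝ, 0 < u₀ → ∀ u v : ℝ → ℝ, u 0 = u₀ → v 0 = 0 →
        (∀ t : ℝ, 0 ≤ t → HasDerivAt u (f (v t)) t) →
        (∀ t : ℝ, 0 ≤ t → HasDerivAt v (-f (u t)) t) →
        (∀ t ∈ Ico 0 (τ u₀), 0 < u t) ∧ u (τ u₀) = 0) ∧
      Tendsto τ (𝓝[>] 0) (𝓝 (-π / (2 * deriv f 0))) ∧ Tendsto τ atTop atTop := by
  obtain ⟨s, hs, hpos, hs0, hfs⟩ := exists_stiffness_of_negative_feedback hf hfb hderiv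
  have hcont : Continuous (quadrantTime s) := continuous_quadrantTime hs hpos
  refine ⟨quadrantTime s, hcont.continuousOn, fun u₀ _ => quadrantTime_pos hs hpos u₀, ?_, ?_, ?_⟩
  · rintro _ hu₀ u v rfl hv0 hu hv
    exact first_zero_eq_quadrantTime hs hpos hu₀ hv0 (fun t ht => hfs (v t) ▸ hu t ht)
      fun t ht => by simpa only [hfs, neg_neg] using hv t ht
  · have hzero : quadrantTime s 0 = -π / (2 * deriv f 0) := by
      rw [quadrantTime_zero hs hpos, hs0, mul_neg, div_neg, neg_div]
    exact hzero ▸ hcont.continuousAt.mono_left nhdsWithin_le_nhds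
  · have hlim : Tendsto s atTop (𝓝 0) := by
      refine (neg_zero (G := ℝ) ▸ hsub.tendsto_div_nhds_zero.neg).congr' ?_
      filter_upwards [eventually_ne_atTop 0] with x hx
      rw [hfs, id, neg_div, neg_neg, mul_div_cancel_left₀ _ hx]
    exact tendsto_quadrantTime_atTop hs hpos hlim

theorem statement_15 (f : ℝ → ℝ) (hf : ContDiff ℝ 1 f)
    (hodd : ∀ x : ℝ, f (-x) = -f x) (hfb : ∀ x : ℝ, x ≠ 0 → x * f x < 0)
    (hderiv : deriv f 0 < 0)
    (hconst : ∃ ρ : ℝ, 0 < ρ ∧ ∀ x : ℝ, ρ ≤ x → f x = f ρ) :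
    ∃ τ : ℝ → ℝ, ContinuousOn τ (Ioi 0) ∧ (∀ u₀ : ℝ, 0 < u₀ → 0 < τ u₀) ∧
      (∀ u₀ : ℝ, 0 < u₀ → ∀ u v : ℝ → ℝ, u 0 = u₀ → v 0 = 0 →
        (∀ t : ℝ, 0 ≤ t → HasDerivAt u (f (v t)) t) →
        (∀ t : ℝ, 0 ≤ t → HasDerivAt v (-f (u t)) t) →
        (∀ t ∈ Ico 0 (τ u₀), 0 < u t) ∧ u (τ u₀) = 0) ∧
      Tendsto τ (nhdsWithin 0 (Ioi 0)) (nhds (-Real.pi / (2 * deriv f 0))) ∧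
      Tendsto τ atTop atTop := by
  obtain ⟨ρ, -, hρ⟩ := hconst
  exact statement_15_general hf.continuous hfb hderiv <|
    (Asymptotics.isLittleO_const_id_atTop (f ρ)).congr'
      ((eventually_ge_atTop ρ).mono fun x hx => (hρ x hx).symm) .rfl
end

section
/- Given reals a, c, δ, γ > 0 satisfying (i) c < min(a, δ), (ii) γ ≥ 4a and γ > δ, (iii) δ + (c/δ)·γ ≤ a, suppose f is continuously differentiable, satisfies (H) and (H''), is constant on [ρ, ∞) for some ρ > 0, and satisfies (1/γ)·∫₀^a |f(s)| ds < a - c. Then the solution (u, v) : [0,∞) → ℝ² of the planar system u' = f(v), v' = -f(u) with u(0) = 2a - c, v(0) = 0 has its first positive zero of u before time 1: there exists t₀ ∈ (0,1) with u(t₀) = 0 and u(t) > 0 for all t ∈ [0, t₀). -/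
/-!
With `G x = -∫₀ˣ f`, the energy `G (u t) + G (v t)` is conserved, hence equal to `G b` for
`b = 2a - c`. As `G` is strictly increasing on `[0, ∞)`, both `u` and `v` stay at most `b` as long
as they are nonnegative. The integral hypothesis says `2 G a < G b`, so `u` and `v` are never both
below `a`: at each time one of them lies on the plateau `[a, b]`, where `f = -γ`, while `f ≤ 0` at
the other. So `v - u` grows at speed at least `γ` while `u ≥ 0`; as it starts at `-b` and cannot
exceed `b`, the component `u` vanishes by time `2 b / γ < 1`.
-/

open Set Filter

lemma exists_first_eq_of_lt_of_le {α β : Type*} [ConditionallyCompleteLinearOrder α]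
    [TopologicalSpace α] [OrderTopology α] [DenselyOrdered α] [LinearOrder β] [TopologicalSpace β]
    [OrderClosedTopology β] {φ : α → β} {a b : α} {c : β} (hab : a ≤ b)
    (hφ : ContinuousOn φ (Icc a b)) (ha : c < φ a) (hb : φ b ≤ c) :
    ∃ x ∈ Ioc a b, φ x = c ∧ ∀ y ∈ Ico a x, c < φ y := by
  have hclosed : IsClosed (Icc a b ∩ φ ⁻¹' Iic c) :=
    hφ.preimage_isClosed_of_isClosed isClosed_Icc isClosed_Iic
  obtain ⟨x, ⟨hx, hφx⟩, hleast⟩ :=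
    (isCompact_Icc.of_isClosed_subset hclosed inter_subset_left).exists_isLeast
      ⟨b, right_mem_Icc.2 hab, hb⟩
  have hbefore : ∀ y ∈ Ico a x, c < φ y := fun y hy =>
    not_le.1 fun hle => hy.2.not_ge (hleast ⟨⟨hy.1, hy.2.le.trans hx.2⟩, hle⟩)
  obtain ⟨y, hy, hφy⟩ : c ∈ φ '' Icc a x :=
    intermediate_value_Icc' hx.1 (hφ.mono (Icc_subset_Icc_right hx.2)) ⟨hφx, ha.le⟩
  obtain rfl : y = x :=
    hy.2.eq_of_not_lt fun hlt => (hbefore y ⟨hy.1, hlt⟩).ne' hφy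
  have hne : a ≠ y := by
    rintro rfl
    exact ha.ne' hφy
  exact ⟨y, ⟨lt_of_le_of_ne hx.1 hne, hx.2⟩, hφy, hbefore⟩

lemma mul_sub_le_sub_of_le_deriv_right {g g' : ℝ → ℝ} {a b C : ℝ} (hab : a ≤ b)
    (hg : ContinuousOn g (Icc a b)) (hg' : ∀ x ∈ Ico a b, HasDerivWithinAt g (g' x) (Ici x) x)
    (hC : ∀ x ∈ Ico a b, C ≤ g' x) : C * (b - a) ≤ g b - g a := by
  have hline : ∀ x, HasDerivAt (fun x => g a + C * (x - a)) C x := fun x =>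
    ((((hasDerivAt_id x).sub_const a).const_mul C).const_add (g a)).congr_deriv (mul_one C)
  have hle : g a + C * (b - a) ≤ g b :=
    image_le_of_deriv_right_le_deriv_boundary
      (fun x _ => (hline x).continuousAt.continuousWithinAt)
      (fun x _ => (hline x).hasDerivWithinAt) (by simp) hg hg' hC (right_mem_Icc.2 hab)
  linarith

lemma nonpos_of_forall_pos_neg {f : ℝ → ℝ} (hf : Continuous f) (hneg : ∀ x, 0 < x → f x < 0)
    {x : ℝ} (hx : 0 ≤ x) : f x ≤ 0 :=
  le_on_closure (s := Ioi 0) (fun y hy => (hneg y hy).le) hf.continuousOn continuousOn_const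
    (by rwa [closure_Ioi])

/-- The potential `G x = -∫₀ˣ f`, whose sum over the two coordinates is the conserved energy of the
planar system associated to `f`. The sign makes `G` increasing on `[0, ∞)` under negative
feedback. -/
noncomputable def potential (f : ℝ → ℝ) (x : ℝ) : ℝ := -∫ s in (0 : ℝ)..x, f s

@[simp]
lemma potential_zero (f : ℝ → ℝ) : potential f 0 = 0 := by simp [potential]

lemma hasDerivAt_potential {f : ℝ → ℝ} (hf : Continuous f) (x : ℝ) :
    HasDerivAt (potential f) (-f x) x :=
  (hf.integral_hasStrictDerivAt 0 x).hasDerivAt.neg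

lemma strictMonoOn_potential {f : ℝ → ℝ} (hf : Continuous f) (hneg : ∀ x, 0 < x → f x < 0) :
    StrictMonoOn (potential f) (Ici 0) :=
  strictMonoOn_of_hasDerivWithinAt_pos (convex_Ici 0)
    (fun x _ => (hasDerivAt_potential hf x).continuousAt.continuousWithinAt)
    (fun x _ => (hasDerivAt_potential hf x).hasDerivWithinAt)
    (fun x hx => neg_pos.2 (hneg x (by rwa [interior_Ici] at hx)))

lemma potential_nonneg {f : ℝ → ℝ} (hf : Continuous f) (hneg : ∀ x, 0 < x → f x < 0) {x : ℝ}
    (hx : 0 ≤ x) : 0 ≤ potential f x := by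
  simpa only [potential_zero] using (strictMonoOn_potential hf hneg).monotoneOn self_mem_Ici hx hx

lemma potential_eq_integral_abs {f : ℝ → ℝ} {x : ℝ} (hx : 0 ≤ x)
    (hf : ∀ s ∈ Icc 0 x, f s ≤ 0) : potential f x = ∫ s in (0 : ℝ)..x, |f s| := by
  rw [potential, ← intervalIntegral.integral_neg]
  refine intervalIntegral.integral_congr fun s hs => ?_
  rw [uIcc_of_le hx] at hs
  exact (abs_of_nonpos (hf s hs)).symm

lemma mul_sub_le_potential_sub {f : ℝ → ℝ} {a b γ : ℝ} (hf : Continuous f) (hab : a ≤ b)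
    (hplat : ∀ x ∈ Icc a b, f x ≤ -γ) : γ * (b - a) ≤ potential f b - potential f a :=
  mul_sub_le_sub_of_le_deriv_right hab
    (fun x _ => (hasDerivAt_potential hf x).continuousAt.continuousWithinAt)
    (fun x _ => (hasDerivAt_potential hf x).hasDerivWithinAt)
    (fun x hx => le_neg_of_le_neg (hplat x (Ico_subset_Icc_self hx)))

lemma two_mul_potential_lt {f : ℝ → ℝ} {a b γ : ℝ} (hf : Continuous f)
    (hneg : ∀ x, 0 < x → f x < 0) (ha : 0 ≤ a) (hab : a ≤ b) (hplat : ∀ x ∈ Icc a b, f x ≤ -γ)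
    (hint : ∫ s in (0 : ℝ)..a, |f s| < γ * (b - a)) : 2 * potential f a < potential f b := by
  rw [← potential_eq_integral_abs ha fun s hs => nonpos_of_forall_pos_neg hf hneg hs.1] at hint
  linarith [mul_sub_le_potential_sub hf hab hplat]

lemma le_of_potential_add_eq {f : ℝ → ℝ} {x y b : ℝ} (hf : Continuous f)
    (hneg : ∀ x, 0 < x → f x < 0) (hx : 0 ≤ x) (hy : 0 ≤ y) (hb : 0 ≤ b)
    (hE : potential f x + potential f y = potential f b) : x ≤ b :=
  ((strictMonoOn_potential hf hneg).le_iff_le hx hb).1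
    (by linarith [potential_nonneg hf hneg hy])

lemma le_neg_sub_of_potential_add_eq {f : ℝ → ℝ} {x y a b γ : ℝ} (hf : Continuous f)
    (hneg : ∀ x, 0 < x → f x < 0) (ha : 0 ≤ a) (hb : 0 ≤ b) (hplat : ∀ x ∈ Icc a b, f x ≤ -γ)
    (hgap : 2 * potential f a < potential f b) (hx : 0 ≤ x) (hy : 0 ≤ y)
    (hE : potential f x + potential f y = potential f b) : γ ≤ -f x - f y := by
  have hfx : f x ≤ 0 := nonpos_of_forall_pos_neg hf hneg hx
  have hfy : f y ≤ 0 := nonpos_of_forall_pos_neg hf hneg hy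
  rcases le_or_gt a x with hax | hxa
  · linarith [hplat x ⟨hax, le_of_potential_add_eq hf hneg hx hy hb hE⟩]
  rcases le_or_gt a y with hay | hya
  · linarith [hplat y ⟨hay, le_of_potential_add_eq hf hneg hy hx hb (by rwa [add_comm])⟩]
  have hmono := strictMonoOn_potential hf hneg
  linarith [hmono hx ha hxa, hmono hy ha hya]

/-- `(u, v)` solves the planar system `u' = f(v)`, `v' = -f(u)` on `[0, ∞)`; the derivatives at `0`
are one-sided. -/
structure IsPlanarSolution (f u v : ℝ → ℝ) : Prop where
  hasDerivWithinAt_fst : ∀ t, 0 ≤ t → HasDerivWithinAt u (f (v t)) (Ici 0) t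
  hasDerivWithinAt_snd : ∀ t, 0 ≤ t → HasDerivWithinAt v (-f (u t)) (Ici 0) t

namespace IsPlanarSolution

variable {f u v : ℝ → ℝ}

lemma continuousOn_fst (h : IsPlanarSolution f u v) : ContinuousOn u (Ici 0) :=
  fun t ht => (h.hasDerivWithinAt_fst t ht).continuousWithinAt

lemma continuousOn_snd (h : IsPlanarSolution f u v) : ContinuousOn v (Ici 0) :=
  fun t ht => (h.hasDerivWithinAt_snd t ht).continuousWithinAt

lemma potential_add_potential_eq (h : IsPlanarSolution f u v) (hf : Continuous f) {t : ℝ}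
    (ht : 0 ≤ t) :
    potential f (u t) + potential f (v t) = potential f (u 0) + potential f (v 0) := by
  have hderiv : ∀ s, 0 ≤ s →
      HasDerivWithinAt (fun s => potential f (u s) + potential f (v s)) 0 (Ici 0) s := fun s hs =>
    (((hasDerivAt_potential hf (u s)).comp_hasDerivWithinAt s (h.hasDerivWithinAt_fst s hs)).add
      ((hasDerivAt_potential hf (v s)).comp_hasDerivWithinAt s
        (h.hasDerivWithinAt_snd s hs))).congr_deriv (by ring)
  exact constant_of_has_deriv_right_zero
    (fun s hs => (hderiv s hs.1).continuousWithinAt.mono Icc_subset_Ici_self)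
    (fun s hs => (hderiv s hs.1).mono (Ici_subset_Ici.2 hs.1)) t ⟨ht, le_rfl⟩

lemma snd_zero_le (h : IsPlanarSolution f u v) (hnonpos : ∀ x, 0 ≤ x → f x ≤ 0) {t : ℝ}
    (ht : 0 ≤ t) (hu : ∀ s ∈ Ico 0 t, 0 ≤ u s) : v 0 ≤ v t := by
  have hle := mul_sub_le_sub_of_le_deriv_right (C := 0) ht
    (h.continuousOn_snd.mono Icc_subset_Ici_self)
    (fun s hs => (h.hasDerivWithinAt_snd s hs.1).mono (Ici_subset_Ici.2 hs.1))
    (fun s hs => neg_nonneg.2 (hnonpos _ (hu s hs)))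
  linarith

lemma mul_le_snd_sub_fst_sub {γ T : ℝ} (h : IsPlanarSolution f u v) (hT : 0 ≤ T)
    (hspeed : ∀ t ∈ Ico 0 T, γ ≤ -f (u t) - f (v t)) :
    γ * T ≤ (v T - u T) - (v 0 - u 0) := by
  simpa only [sub_zero] using mul_sub_le_sub_of_le_deriv_right (g := fun t => v t - u t) hT
    ((h.continuousOn_snd.sub h.continuousOn_fst).mono Icc_subset_Ici_self)
    (fun t ht => ((h.hasDerivWithinAt_snd t ht.1).sub (h.hasDerivWithinAt_fst t ht.1)).mono
      (Ici_subset_Ici.2 ht.1)) hspeed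

lemma fst_le_of_forall_nonneg {a b γ T : ℝ} (h : IsPlanarSolution f u v) (hf : Continuous f)
    (hneg : ∀ x, 0 < x → f x < 0) (ha : 0 ≤ a) (hplat : ∀ x ∈ Icc a b, f x ≤ -γ)
    (hgap : 2 * potential f a < potential f b) (hu0 : u 0 = b) (hv0 : v 0 = 0) (hT : 0 ≤ T)
    (hu : ∀ t ∈ Icc 0 T, 0 ≤ u t) : u T ≤ 2 * b - γ * T := by
  have hb : 0 ≤ b := hu0 ▸ hu 0 ⟨le_rfl, hT⟩
  have hE : ∀ t ∈ Icc 0 T, potential f (u t) + potential f (v t) = potential f b := fun t ht => by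
    rw [h.potential_add_potential_eq hf ht.1, hu0, hv0, potential_zero, add_zero]
  have hv : ∀ t ∈ Icc 0 T, 0 ≤ v t := fun t ht => hv0 ▸
    h.snd_zero_le (fun _ => nonpos_of_forall_pos_neg hf hneg) ht.1
      fun s hs => hu s ⟨hs.1, hs.2.le.trans ht.2⟩
  have hTmem : T ∈ Icc 0 T := right_mem_Icc.2 hT
  have hvT : v T ≤ b := le_of_potential_add_eq hf hneg (hv T hTmem) (hu T hTmem) hb
    (by rw [add_comm, hE T hTmem])
  have hgrowth : γ * T ≤ (v T - u T) - (v 0 - u 0) := h.mul_le_snd_sub_fst_sub hT fun t ht =>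
    have ht := Ico_subset_Icc_self ht
    le_neg_sub_of_potential_add_eq hf hneg ha hb hplat hgap (hu t ht) (hv t ht) (hE t ht)
  linarith

end IsPlanarSolution

theorem statement_16_general {f u v : ℝ → ℝ} {a b γ : ℝ} (ha : 0 ≤ a) (hγ : 0 < γ)
    (hf : Continuous f) (hneg : ∀ x, 0 < x → f x < 0) (hplat : ∀ x ∈ Icc a b, f x ≤ -γ)
    (hint : (1 / γ) * ∫ s in (0 : ℝ)..a, |f s| < b - a)
    (h : IsPlanarSolution f u v) (hu0 : u 0 = b) (hv0 : v 0 = 0) :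
    ∃ t₀ ∈ Ioc 0 (2 * b / γ), u t₀ = 0 ∧ ∀ t ∈ Ico 0 t₀, 0 < u t := by
  have hab : a < b := sub_pos.1 <| hint.trans_le' <| mul_nonneg (by positivity) <|
    intervalIntegral.integral_nonneg ha fun _ _ => abs_nonneg _
  have hgap : 2 * potential f a < potential f b := two_mul_potential_lt hf hneg ha hab.le hplat
    (by rwa [one_div, inv_mul_lt_iff₀ hγ] at hint)
  have hb : 0 < b := ha.trans_lt hab
  have hT : 0 ≤ 2 * b / γ := by positivity
  obtain ⟨t₁, ht₁, hut₁⟩ : ∃ t ∈ Icc 0 (2 * b / γ), u t ≤ 0 := by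
    by_contra! hpos
    have hle := h.fst_le_of_forall_nonneg hf hneg ha hplat hgap hu0 hv0 hT
      fun t ht => (hpos t ht).le
    rw [mul_div_cancel₀ _ hγ.ne', sub_self] at hle
    exact hle.not_gt (hpos _ (right_mem_Icc.2 hT))
  obtain ⟨t₀, ht₀, hzero⟩ := exists_first_eq_of_lt_of_le ht₁.1
    (h.continuousOn_fst.mono Icc_subset_Ici_self) (hu0 ▸ hb) hut₁
  exact ⟨t₀, ⟨ht₀.1, ht₀.2.trans ht₁.2⟩, hzero⟩

theorem statement_16 (f : ℝ → ℝ) (a c δ γ : ℝ)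
    (ha : 0 < a) (hc : 0 < c) (hδ : 0 < δ) (hγ : 0 < γ)
    (hi : c < min a δ) (hii : 4 * a ≤ γ ∧ δ < γ) (hiii : δ + (c / δ) * γ ≤ a)
    (hf : ContDiff ℝ 1 f) (hH : HypH f) (hH'' : HypH'' f a c δ γ)
    (hconst : ∃ ρ : ℝ, 0 < ρ ∧ ∀ x : ℝ, ρ ≤ x → f x = f ρ)
    (hintegral : (1 / γ) * ∫ s in (0 : ℝ)..a, |f s| < a - c) :
    ∀ u v : ℝ → ℝ, u 0 = 2 * a - c → v 0 = 0 →
      (∀ t : ℝ, 0 ≤ t → HasDerivAt u (f (v t)) t) →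
      (∀ t : ℝ, 0 ≤ t → HasDerivAt v (-f (u t)) t) →
      ∃ t₀ ∈ Ioo (0 : ℝ) 1, u t₀ = 0 ∧ ∀ t ∈ Ico 0 t₀, 0 < u t := by
  intro u v hu0 hv0 hu hv
  have hsol : IsPlanarSolution f u v :=
    ⟨fun t ht => (hu t ht).hasDerivWithinAt, fun t ht => (hv t ht).hasDerivWithinAt⟩
  obtain ⟨t₀, ⟨hpos, hle⟩, hzero⟩ := statement_16_general ha.le hγ hf.continuous
    (fun x hx => (pos_iff_neg_of_mul_neg (hH.2.1 x hx.ne')).1 hx) (fun x hx => (hH''.2.2.1 x hx).le)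
    (by linarith) hsol hu0 hv0
  exact ⟨t₀, ⟨hpos, hle.trans_lt ((div_lt_one hγ).2 (by linarith [hii.1]))⟩, hzero⟩
end
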